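/- arXiv:2410.01549 — 6 statements merged into one kernel-verified Lean document; each statement's English description precedes it below -/
import Mathlib

section
/- Let k ≥ 2 be even and let m ≥ 6 be even. Set c = m−2 and d = m−4 if m ≡ 0 (mod 4), and c = m−1 and d = m−2 if m ≡ 2 (mod 4). Suppose there exists an edge 2-coloring of the complete graph on n vertices with no monochromatic copy of the kipas K̂_m. Then there exists a Gallai k-coloring of the complete graph on n + 5c(5^((k−2)/2) − 1) − d(k−2) vertices with no monochromatic copy of K̂_m. Consequently GR_k(K̂_m) ≥ R_2(K̂_m) + 5c(5^((k−2)/2) − 1) − d(k−2), where R_2(K̂_m) is the 2-color Ramsey number of the kipas. -/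
open SimpleGraph

/-- A monochromatic copy of `H` in the graph `G` edge-colored by `c`:
an injective map sending edges of `H` to edges of `G`, all image edges of one color. -/
def IsMonoCopy {α V : Type*} {k : ℕ} (G : SimpleGraph V) (c : V → V → Fin k)
    (H : SimpleGraph α) : Prop :=
  ∃ (f : α → V) (i : Fin k), Function.Injective f ∧
    ∀ a b, H.Adj a b → G.Adj (f a) (f b) ∧ c (f a) (f b) = i

/-- The edge coloring `c` of `G` has no rainbow triangle. -/
def NoRainbowTriangle {V : Type*} {k : ℕ} (G : SimpleGraph V) (c : V → V → Fin k) : Prop :=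
  ¬ ∃ x y z : V, G.Adj x y ∧ G.Adj y z ∧ G.Adj x z ∧
    c x y ≠ c y z ∧ c y z ≠ c x z ∧ c x y ≠ c x z

/-- The Gallai–Ramsey number `GR_k(H)`: the least `N` such that every
rainbow-triangle-free `k`-edge-coloring of the complete graph on `N` vertices
contains a monochromatic copy of `H`. -/
noncomputable def GallaiRamsey (k : ℕ) {α : Type*} (H : SimpleGraph α) : ℕ :=
  sInf {N | ∀ c : Fin N → Fin N → Fin k, (∀ x y, c x y = c y x) →
    NoRainbowTriangle (⊤ : SimpleGraph (Fin N)) c →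
    IsMonoCopy (⊤ : SimpleGraph (Fin N)) c H}

/-- The diagonal two-color Ramsey number `R(H, H)`. -/
noncomputable def Ramsey2 {α : Type*} (H : SimpleGraph α) : ℕ :=
  sInf {N | ∀ c : Fin N → Fin N → Fin 2, (∀ x y, c x y = c y x) →
    IsMonoCopy (⊤ : SimpleGraph (Fin N)) c H}

/-- The fan `F_3 = K_1 + 3K_2`: vertex `0` is the center, joined to all other
vertices, together with the three disjoint edges `12`, `34`, `56`. -/
def fanF3 : SimpleGraph (Fin 7) :=
  SimpleGraph.fromRel (fun a b => a = 0 ∨ (a.val % 2 = 1 ∧ b.val = a.val + 1))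

/-- The kipas `K̂_m = K_1 + P_m`: vertex `0` is the center, joined to all other
vertices, and `1, 2, …, m` form a path. -/
def kipasG (m : ℕ) : SimpleGraph (Fin (m + 1)) :=
  SimpleGraph.fromRel (fun a b => a = 0 ∨ (1 ≤ a.val ∧ b.val = a.val + 1))

/-- The wheel `W_m = K_1 + C_m`: vertex `0` is the center, joined to all other
vertices, and `1, 2, …, m` form a cycle. -/
def wheelG (m : ℕ) : SimpleGraph (Fin (m + 1)) :=
  SimpleGraph.fromRel (fun a b =>
    a = 0 ∨ (1 ≤ a.val ∧ b.val = a.val + 1) ∨ (a.val = m ∧ b.val = 1))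

/-- The star `K_{1,n}`: vertex `0` is the center, joined to all other vertices. -/
def starG (n : ℕ) : SimpleGraph (Fin (n + 1)) :=
  SimpleGraph.fromRel (fun a _ => a = 0)

/-- `K⁺_{1,n}`, the star `K_{1,n}` with one edge subdivided: vertex `0` is joined to
`1, …, n`, and the extra vertex `n+1` is joined to `n`. -/
def starPlusG (n : ℕ) : SimpleGraph (Fin (n + 2)) :=
  SimpleGraph.fromRel (fun a b => (a = 0 ∧ b.val ≤ n) ∨ (a.val = n ∧ b.val = n + 1))

/-- The complete graph on `Fin N` with the single edge `{0, 1}` deleted. -/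
def compMinusEdge (N : ℕ) : SimpleGraph (Fin N) where
  Adj x y := x ≠ y ∧ ¬(x.val = 0 ∧ y.val = 1) ∧ ¬(x.val = 1 ∧ y.val = 0)
  symm := by
    refine ⟨?_⟩
    intro x y h
    exact ⟨h.1.symm, fun hc => h.2.2 ⟨hc.2, hc.1⟩, fun hc => h.2.1 ⟨hc.2, hc.1⟩⟩
  loopless := by refine ⟨?_⟩; intro x h; exact h.1 rfl

/-- The complete graph on `Fin M` together with one extra vertex (`none`)
joined exactly to the vertices of `A`. -/
def addVertex (M : ℕ) (A : Set (Fin M)) : SimpleGraph (Option (Fin M)) where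
  Adj x y := (∃ a b : Fin M, x = some a ∧ y = some b ∧ a ≠ b) ∨
    (∃ a ∈ A, (x = some a ∧ y = none) ∨ (x = none ∧ y = some a))
  symm := by
    refine ⟨?_⟩
    rintro x y (⟨a, b, hx, hy, hab⟩ | ⟨a, ha, (⟨hx, hy⟩ | ⟨hx, hy⟩)⟩)
    · exact Or.inl ⟨b, a, hy, hx, hab.symm⟩
    · exact Or.inr ⟨a, ha, Or.inr ⟨hy, hx⟩⟩
    · exact Or.inr ⟨a, ha, Or.inl ⟨hy, hx⟩⟩
  loopless := by
    refine ⟨?_⟩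
    rintro x (⟨a, b, hx, hy, hab⟩ | ⟨a, ha, (⟨hx, hy⟩ | ⟨hx, hy⟩)⟩) <;> simp_all

/-- The star-critical Gallai–Ramsey number `GR*_k(H)`: the least `s` such that
every rainbow-triangle-free `k`-edge-coloring of the complete graph on
`GR_k(H) - 1` vertices plus one extra vertex joined to exactly `s` of them
contains a monochromatic copy of `H`. -/
noncomputable def GRstar (k : ℕ) {α : Type*} (H : SimpleGraph α) : ℕ :=
  sInf {s | ∀ A : Finset (Fin (GallaiRamsey k H - 1)), A.card = s →
    ∀ c : Option (Fin (GallaiRamsey k H - 1)) → Option (Fin (GallaiRamsey k H - 1)) → Fin k,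
      (∀ x y, c x y = c y x) →
      NoRainbowTriangle (addVertex (GallaiRamsey k H - 1) (↑A)) c →
      IsMonoCopy (addVertex (GallaiRamsey k H - 1) (↑A)) c H}

/-- `H` is Gallai-Ramsey-full for `k` colors: the complete graph on `GR_k(H)`
vertices minus one edge admits a rainbow-triangle-free `k`-edge-coloring with
no monochromatic copy of `H`. -/
def GallaiRamseyFull (k : ℕ) {α : Type*} (H : SimpleGraph α) : Prop :=
  ∃ c : Fin (GallaiRamsey k H) → Fin (GallaiRamsey k H) → Fin k,
    (∀ x y, c x y = c y x) ∧
    NoRainbowTriangle (compMinusEdge (GallaiRamsey k H)) c ∧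
    ¬ IsMonoCopy (compMinusEdge (GallaiRamsey k H)) c H

/-- Reachability inside the vertex set `s`: there is a walk all of whose
vertices lie in `s`. -/
def ReachableWithin {V : Type*} (R : SimpleGraph V) (s : Set V) (u v : V) : Prop :=
  ∃ w : R.Walk u v, ∀ x ∈ w.support, x ∈ s



namespace KipasAux

def Consec {V : Type} (m : ℕ) (χ : V → V → ℕ) (i : ℕ) (w : Fin m → V) : Prop :=
  ∀ j j' : Fin m, j'.val = j.val + 1 → χ (w j) (w j') = i

def Unused {V : Type} (χ : V → V → ℕ) (i : ℕ) : Prop := ∀ x y, x ≠ y → χ x y ≠ i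

def Light {V : Type} (m : ℕ) (χ : V → V → ℕ) (i : ℕ) : Prop :=
  (∀ (v : V) (f : Fin (m / 2) → V), Function.Injective f →
    (∀ j, f j ≠ v ∧ χ v (f j) = i) → False) ∧
  (∀ w : Fin m → V, Function.Injective w → Consec m χ i w → False)

def KF {V : Type} (m : ℕ) (χ : V → V → ℕ) (i : ℕ) : Prop :=
  ∀ (v : V) (w : Fin m → V), Function.Injective w →
    (∀ j, w j ≠ v ∧ χ v (w j) = i) → Consec m χ i w → False

def St {V : Type} (m : ℕ) (χ : V → V → ℕ) (i : ℕ) (s : ℕ) : Prop :=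
  (s = 0 → Unused χ i) ∧ (s ≤ 1 → Light m χ i) ∧ KF m χ i

lemma Light.kf {V : Type} {m : ℕ} {χ : V → V → ℕ} {i : ℕ} (h : Light m χ i) : KF m χ i :=
  fun _ w hw _ hc => h.2 w hw hc

lemma Unused.light {V : Type} {m : ℕ} (hm : 6 ≤ m) {χ : V → V → ℕ} {i : ℕ} (h : Unused χ i) :
    Light m χ i := by
  constructor
  · intro v f _ hf
    have := hf ⟨0, by omega⟩
    exact h _ _ this.1.symm this.2
  · intro w hw hc
    refine h (w ⟨0, by omega⟩) (w ⟨1, by omega⟩) ?_ (hc _ _ (by simp))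
    intro e
    have := hw e
    simp at this

lemma St.of_unused {V : Type} {m : ℕ} (hm : 6 ≤ m) {χ : V → V → ℕ} {i s : ℕ} (h : Unused χ i) :
    St m χ i s := ⟨fun _ => h, fun _ => h.light hm, (h.light hm).kf⟩

lemma St.of_light {V : Type} {m : ℕ} {χ : V → V → ℕ} {i s : ℕ} (h : Light m χ i) (hs : 1 ≤ s) :
    St m χ i s := ⟨fun _ => by omega, fun _ => h, h.kf⟩

lemma St.of_kf {V : Type} {m : ℕ} {χ : V → V → ℕ} {i s : ℕ} (h : KF m χ i) (hs : 2 ≤ s) :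
    St m χ i s := ⟨fun _ => by omega, fun _ => by omega, h⟩

lemma St.mono {V : Type} {m : ℕ} {χ : V → V → ℕ} {i s t : ℕ} (h : St m χ i s) (hs : s ≤ t) :
    St m χ i t := ⟨fun _ => h.1 (by omega), fun _ => h.2.1 (by omega), h.2.2⟩

def Gal {V : Type} (χ : V → V → ℕ) : Prop :=
  ∀ x y z, x ≠ y → y ≠ z → x ≠ z → χ x y = χ y z ∨ χ y z = χ x z ∨ χ x y = χ x z

def Ex (m N : ℕ) (s : ℕ → ℕ) : Prop :=
  ∃ (V : Type) (_ : Fintype V) (χ : V → V → ℕ), Fintype.card V = N ∧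
    (∀ x y, χ x y = χ y x) ∧ Gal χ ∧ ∀ i, St m χ i (s i)

/-- pentagon adjacency -/
def adj5 (a b : Fin 5) : Bool := (a - b = 1) || (a - b = 4)

section blow

variable {V : Fin 5 → Type} (χ : ∀ a, V a → V a → ℕ) (p q : ℕ)

def blow (x y : Σ a, V a) : ℕ :=
  if h : x.1 = y.1 then χ y.1 (h ▸ x.2) y.2 else if adj5 x.1 y.1 then p else q

lemma blow_same (a : Fin 5) (x y : V a) : blow χ p q ⟨a, x⟩ ⟨a, y⟩ = χ a x y := by
  simp [blow]

lemma blow_diff {x y : Σ a, V a} (h : x.1 ≠ y.1) :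
    blow χ p q x y = if adj5 x.1 y.1 then p else q := by
  simp [blow, h]

lemma adj5_symm : ∀ a b, adj5 a b = adj5 b a := by decide

lemma blow_symm (hs : ∀ a x y, χ a x y = χ a y x) (x y) :
    blow χ p q x y = blow χ p q y x := by
  by_cases h : x.1 = y.1
  · obtain ⟨a, x⟩ := x
    obtain ⟨b, y⟩ := y
    obtain rfl : a = b := h
    rw [blow_same, blow_same, hs]
  · rw [blow_diff _ _ _ h, blow_diff _ _ _ (Ne.symm h), adj5_symm]

lemma blow_gal (hs : ∀ a x y, χ a x y = χ a y x) (hg : ∀ a, Gal (χ a)) :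
    Gal (blow χ p q) := by
  intro x y z hxy hyz hxz
  by_cases h1 : x.1 = y.1
  · by_cases h2 : y.1 = z.1
    · obtain ⟨a, x⟩ := x
      obtain ⟨b, y⟩ := y
      obtain ⟨c, z⟩ := z
      obtain rfl : a = b := h1
      obtain rfl : a = c := h2
      simp only [blow_same]
      apply hg
      · rintro rfl; exact hxy rfl
      · rintro rfl; exact hyz rfl
      · rintro rfl; exact hxz rfl
    · right; left
      rw [blow_diff _ _ _ h2, blow_diff _ _ _ (h1 ▸ h2), h1]
  · by_cases h2 : y.1 = z.1
    · right; right
      rw [blow_diff _ _ _ h1, blow_diff _ _ _ (h2 ▸ h1), h2]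
    · by_cases h3 : x.1 = z.1
      · left
        rw [blow_diff _ _ _ h1, blow_diff _ _ _ h2, h3, adj5_symm]
      · rw [blow_diff _ _ _ h1, blow_diff _ _ _ h2, blow_diff _ _ _ h3]
        split_ifs <;> simp

/-- a sequence inside one part can be pulled back -/
lemma pull {n : ℕ} (a : Fin 5) (w : Fin n → Σ a, V a) (h : ∀ j, (w j).1 = a) :
    ∃ w' : Fin n → V a, ∀ j, w j = ⟨a, w' j⟩ := by
  have : ∀ j, ∃ y : V a, w j = ⟨a, y⟩ := by
    intro j
    have := h j
    generalize w j = z at this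
    obtain ⟨b, z⟩ := z
    obtain rfl : b = a := this
    exact ⟨z, rfl⟩
  choose w' hw' using this
  exact ⟨w', hw'⟩

lemma const_part {m : ℕ} (w : Fin m → Σ a, V a) (hm : 0 < m)
    (h : ∀ j j' : Fin m, j'.val = j.val + 1 → (w j).1 = (w j').1) :
    ∀ j, (w j).1 = (w ⟨0, hm⟩).1 := by
  rintro ⟨j, hj⟩
  induction j with
  | zero => rfl
  | succ j ih => rw [← ih (by omega)]; exact (h _ _ rfl).symm

lemma path_part {m i : ℕ} (a : Fin 5) (w : Fin m → Σ a, V a) (hw : Function.Injective w)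
    (hc : Consec m (blow χ p q) i w) (h : ∀ j, (w j).1 = a) :
    ∃ w' : Fin m → V a, (∀ j, w j = ⟨a, w' j⟩) ∧ Function.Injective w' ∧
      Consec m (χ a) i w' := by
  obtain ⟨w', hw'⟩ := pull a w h
  refine ⟨w', hw', ?_, ?_⟩
  · intro j j' e
    apply hw
    rw [hw', hw', e]
  · intro j j' e
    have := hc j j' e
    rwa [hw', hw', blow_same] at this

lemma same_part {i : ℕ} (hp : i ≠ p) (hq : i ≠ q) {x y : Σ a, V a}
    (h : blow χ p q x y = i) : x.1 = y.1 := by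
  by_contra hn
  rw [blow_diff _ _ _ hn] at h
  split_ifs at h <;> omega

lemma blow_old {m i s : ℕ} (hm : 6 ≤ m) (hp : i ≠ p) (hq : i ≠ q)
    (h : ∀ a, St m (χ a) i s) : St m (blow χ p q) i s := by
  refine ⟨?_, ?_, ?_⟩
  · intro hs x y hxy e
    have h1 := same_part χ p q hp hq e
    obtain ⟨a, x⟩ := x
    obtain ⟨b, y⟩ := y
    obtain rfl : a = b := h1
    rw [blow_same] at e
    refine (h a).1 hs x y ?_ e
    rintro rfl; exact hxy rfl
  · intro hs
    constructor
    · rintro ⟨a, v⟩ f hf hv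
      have h1 : ∀ j, (f j).1 = a := fun j => (same_part χ p q hp hq (hv j).2).symm
      obtain ⟨f', hf'⟩ := pull a f h1
      refine ((h a).2.1 hs).1 v f' ?_ ?_
      · intro j j' e
        apply hf
        rw [hf', hf', e]
      · intro j
        have := hv j
        rw [hf', blow_same] at this
        refine ⟨?_, this.2⟩
        rintro e
        exact this.1 (by rw [e])
    · intro w hw hc
      have h1 := const_part w (by omega) (fun j j' e => same_part χ p q hp hq (hc j j' e))
      obtain ⟨w', _, h2, h3⟩ := path_part χ p q _ w hw hc h1
      exact ((h _).2.1 hs).2 w' h2 h3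
  · rintro ⟨a, v⟩ w hw hv hc
    have h1 : ∀ j, (w j).1 = a := fun j => (same_part χ p q hp hq (hv j).2).symm
    obtain ⟨w', h4, h2, h3⟩ := path_part χ p q _ w hw hc h1
    refine (h a).2.2 v w' h2 ?_ h3
    intro j
    have := hv j
    rw [h4, blow_same] at this
    refine ⟨?_, this.2⟩
    rintro e
    exact this.1 (by rw [e])

/-- The new colour `i`, whose reduced graph is `A` (triangle-free), with the
light parts `L` independent in `A`. -/
lemma blow_new {m i : ℕ} (hm : 6 ≤ m) (A : Fin 5 → Fin 5 → Bool) (L : Fin 5 → Bool)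
    (hA : ∀ x y : Σ a, V a, x.1 ≠ y.1 → (blow χ p q x y = i → A x.1 y.1))
    (htri : ∀ a b c, A a b → A a c → A b c → False)
    (hL : ∀ a b, L a → A a b → L b → False)
    (hl : ∀ a, L a → Light m (χ a) i)
    (hu : ∀ a, L a = false → Unused (χ a) i) : KF m (blow χ p q) i := by
  rintro ⟨a, v⟩ w hw hv hc
  have hstep : ∀ j, (w j).1 = a ∨ A a (w j).1 := by
    intro j
    by_cases h : (w j).1 = a
    · exact Or.inl h
    · exact Or.inr (hA ⟨a, v⟩ (w j) (Ne.symm h) (hv j).2)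
  have hunused : ∀ x y : Σ a, V a, x ≠ y → x.1 = y.1 → L x.1 = false →
      blow χ p q x y ≠ i := by
    rintro ⟨b, x⟩ ⟨b', y⟩ hxy h hL
    obtain rfl : b = b' := h
    rw [blow_same]
    apply hu b hL
    rintro rfl; exact hxy rfl
  cases ha : L a with
  | true =>
    have hpair : ∀ t : Fin (m / 2), ∃ j : Fin m, j.val / 2 = t.val ∧ (w j).1 = a := by
      intro t
      have ht := t.2
      by_contra hcon
      push Not at hcon
      have hne0 := hcon ⟨2 * t.val, by omega⟩ (by simp)
      have hne1 := hcon ⟨2 * t.val + 1, by omega⟩ (by simp; omega)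
      have e := hc ⟨2 * t.val, by omega⟩ ⟨2 * t.val + 1, by omega⟩ rfl
      have A0 := (hstep ⟨2 * t.val, by omega⟩).resolve_left hne0
      have A1 := (hstep ⟨2 * t.val + 1, by omega⟩).resolve_left hne1
      by_cases hs : (w ⟨2 * t.val, by omega⟩).1 = (w ⟨2 * t.val + 1, by omega⟩).1
      · refine hunused _ _ ?_ hs ?_ e
        · intro h
          have := hw h
          simp at this
        · by_contra hL'
          exact hL a _ ha A0 (by simpa using hL')
      · exact htri _ _ _ A0 A1 (hA _ _ hs e)
    choose g hg1 hg2 using hpair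
    obtain ⟨f', hf'⟩ := pull a (fun t => w (g t)) hg2
    refine (hl a ha).1 v f' ?_ ?_
    · intro t t' e
      have h1 : w (g t) = w (g t') := by
        have h2 := hf' t
        have h3 := hf' t'
        rw [h2, h3, e]
      have h4 := hw h1
      apply Fin.ext
      rw [← hg1 t, ← hg1 t', h4]
    · intro t
      have h1 := hv (g t)
      have h2 := hf' t
      rw [h2, blow_same] at h1
      refine ⟨?_, h1.2⟩
      intro e
      exact h1.1 (by rw [e])
  | false =>
    have hstep' : ∀ j, A a (w j).1 := by
      intro j
      rcases hstep j with h | h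
      · exact absurd (hv j).2 (hunused ⟨a, v⟩ (w j) (hv j).1.symm h.symm ha)
      · exact h
    have h1 := const_part w (by omega) (by
      intro j j' e
      by_contra hne
      exact htri _ _ _ (hstep' j) (hstep' j') (hA _ _ hne (hc j j' e)))
    obtain ⟨w', _, h2, h3⟩ := path_part χ p q _ w hw hc h1
    cases hb : L (w ⟨0, by omega⟩).1 with
    | true => exact (hl _ hb).2 w' h2 h3
    | false => exact ((hu _ hb).light hm).2 w' h2 h3

end blow

lemma pentagon {m : ℕ} (hm : 6 ≤ m) (p q : ℕ) (hpq : p ≠ q) (N : Fin 5 → ℕ)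
    (s : Fin 5 → ℕ → ℕ) (t : ℕ → ℕ)
    (h : ∀ a, Ex m (N a) (s a)) (htp : 2 ≤ t p) (htq : 2 ≤ t q)
    (ht : ∀ a i, i ≠ p → i ≠ q → s a i ≤ t i)
    (hp : ∀ a, s a p ≤ if a = 1 ∨ a = 4 then 1 else 0)
    (hq : ∀ a, s a q ≤ if a = 2 ∨ a = 3 then 1 else 0) :
    Ex m (∑ a, N a) t := by
  choose V hV χ hcard hs hg hst using h
  refine ⟨Σ a, V a, inferInstance, blow χ p q, ?_, blow_symm χ p q hs, blow_gal χ p q hs hg, ?_⟩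
  · simp [hcard]
  intro i
  by_cases hip : i = p
  · subst hip
    refine St.of_kf ?_ htp
    refine blow_new χ i q hm adj5 (fun a => decide (a = 1 ∨ a = 4)) ?_ (by decide) (by decide) ?_ ?_
    · intro x y hxy e
      rw [blow_diff _ _ _ hxy] at e
      by_contra hn
      rw [if_neg hn] at e
      omega
    · intro a ha
      have h1 := hp a
      rw [if_pos (by simpa using ha)] at h1
      exact (hst a i).2.1 h1
    · intro a ha
      have h1 := hp a
      rw [if_neg (by simpa using ha)] at h1
      exact (hst a i).1 (by omega)
  by_cases hiq : i = q
  · subst hiq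
    refine St.of_kf ?_ htq
    refine blow_new χ p i hm (fun a b => decide (a ≠ b) && !adj5 a b)
      (fun a => decide (a = 2 ∨ a = 3)) ?_ (by decide) (by decide) ?_ ?_
    · intro x y hxy e
      rw [blow_diff _ _ _ hxy] at e
      by_contra hn
      rw [if_pos (by simpa [hxy] using hn)] at e
      omega
    · intro a ha
      have h1 := hq a
      rw [if_pos (by simpa using ha)] at h1
      exact (hst a i).2.1 h1
    · intro a ha
      have h1 := hq a
      rw [if_neg (by simpa using ha)] at h1
      exact (hst a i).1 (by omega)
  exact blow_old χ p q hm hip hiq (fun a => (hst a i).mono (ht a i hip hiq))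

lemma half_cell {m : ℕ} (hm : 6 ≤ m) (e : ℕ) :
    Ex m (m / 2) (fun i => if i = e then 1 else 0) := by
  refine ⟨Fin (m / 2), inferInstance, fun _ _ => e, by simp, fun _ _ => rfl, ?_, ?_⟩
  · intro x y z _ _ _; simp
  · intro i
    by_cases h : i = e
    · refine St.of_light ?_ (by simp [h])
      constructor
      · intro v f hf hv
        obtain ⟨j, hj⟩ := (Finite.injective_iff_surjective.1 hf) v
        exact (hv j).1 hj
      · intro w hw _
        have := Fintype.card_le_of_injective w hw
        simp at this
        omega
    · refine St.of_unused hm ?_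
      intro x y _ h'
      exact h h'.symm

lemma full_cell {m c : ℕ} (hm : 6 ≤ m) (hme : m % 2 = 0)
    (hc : (m % 4 = 0 ∧ c = m - 2) ∨ (m % 4 = 2 ∧ c = m - 1)) (e f : ℕ) (hef : e ≠ f) :
    Ex m c (fun i => if i = e ∨ i = f then 1 else 0) := by
  haveI : NeZero c := ⟨by omega⟩
  set t := (m - 2) / 4 with ht
  let χ : ZMod c → ZMod c → ℕ := fun x y =>
    if (y - x).val ≤ t ∨ c - t ≤ (y - x).val then e else f
  have key : ∀ (S : Finset ℕ), S.card < m / 2 → ∀ (v : ZMod c) (g : Fin (m / 2) → ZMod c),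
      Function.Injective g → (∀ j, (g j - v).val ∈ S) → False := by
    intro S hS v g hg hgS
    have h1 : (Finset.univ : Finset (Fin (m / 2))).card ≤ S.card := by
      refine Finset.card_le_card_of_injOn (fun j => (g j - v).val) (fun j _ => hgS j) ?_
      intro j _ j' _ e
      have := ZMod.val_injective c e
      exact hg (sub_left_injective this)
    simp at h1
    omega
  have hpath : ∀ w : Fin m → ZMod c, Function.Injective w → False := by
    intro w hw
    have := Fintype.card_le_of_injective w hw
    simp [ZMod.card] at this
    omega
  refine ⟨ZMod c, inferInstance, χ, ZMod.card c, ?_, ?_, ?_⟩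
  · intro x y
    by_cases hxy : x = y
    · rw [hxy]
    have h0 : y - x ≠ 0 := sub_ne_zero.2 (Ne.symm hxy)
    have h1 : (x - y).val = c - (y - x).val := by
      rw [← neg_sub, ZMod.neg_val, if_neg h0]
    have h2 := ZMod.val_lt (y - x)
    have h3 : (y - x).val ≠ 0 := by
      rwa [Ne, ZMod.val_eq_zero]
    simp only [χ, h1]
    congr 1
    apply propext
    omega
  · intro x y z _ _ _
    simp only [χ]
    split_ifs <;> simp
  · intro i
    by_cases hi : i = e ∨ i = f
    · refine St.of_light ⟨?_, fun w hw _ => hpath w hw⟩ (by simp [hi])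
      intro v g hg hv
      have h0 : ∀ j, (g j - v).val ≠ 0 := by
        intro j
        rw [Ne, ZMod.val_eq_zero, sub_eq_zero]
        exact (hv j).1
      rcases hi with rfl | rfl
      · refine key (Finset.Icc 1 t ∪ Finset.Icc (c - t) (c - 1)) ?_ v g hg ?_
        · refine lt_of_le_of_lt (Finset.card_union_le _ _) ?_
          simp
          omega
        · intro j
          have h1 := (hv j).2
          have h2 := ZMod.val_lt (g j - v)
          have h3 := h0 j
          simp only [χ] at h1
          split_ifs at h1 with h4
          · simp only [Finset.mem_union, Finset.mem_Icc]; omega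
          · omega
      · refine key (Finset.Icc (t + 1) (c - 1 - t)) ?_ v g hg ?_
        · simp
          omega
        · intro j
          have h1 := (hv j).2
          have h2 := ZMod.val_lt (g j - v)
          simp only [χ] at h1
          split_ifs at h1 with h4
          · omega
          · simp only [Finset.mem_Icc]; omega
    · refine St.of_unused hm ?_
      intro x y _ h'
      simp only [χ] at h'
      split_ifs at h' <;> omega

lemma Ex.cast {m N N' : ℕ} {s : ℕ → ℕ} (h : Ex m N s) (e : N = N') : Ex m N' s := e ▸ h

lemma full {m c : ℕ} (hm : 6 ≤ m) (hme : m % 2 = 0)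
    (hc : (m % 4 = 0 ∧ c = m - 2) ∨ (m % 4 = 2 ∧ c = m - 1)) (e f : ℕ) (hef : e ≠ f) (t : ℕ)
    (he : 2 * t ≤ e) (hf : 2 * t ≤ f) :
    Ex m (5 ^ t * c) (fun i => if i < 2 * t then 2 else if i = e ∨ i = f then 1 else 0) := by
  induction t with
  | zero =>
    simpa using full_cell hm hme hc e f hef
  | succ t ih =>
    have h := ih (by omega) (by omega)
    refine (pentagon hm (2 * t) (2 * t + 1) (by omega) (fun _ => 5 ^ t * c) _ _ (fun _ => h)
      ?_ ?_ ?_ ?_ ?_).cast ?_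
    · rw [if_pos (by omega)]
    · rw [if_pos (by omega)]
    · intro a i h1 h2
      split_ifs <;> omega
    · intro a
      rw [if_neg (by omega), if_neg (by omega)]; omega
    · intro a
      rw [if_neg (by omega), if_neg (by omega)]; omega
    · simp; ring

lemma part {m c h : ℕ} (hm : 6 ≤ m) (hme : m % 2 = 0)
    (hc : (m % 4 = 0 ∧ c = m - 2) ∨ (m % 4 = 2 ∧ c = m - 1)) (hh : c = m / 2 + h)
    (e : ℕ) (t : ℕ) (he : 2 * t ≤ e) :
    Ex m (5 ^ t * c - h) (fun i => if i < 2 * t then 2 else if i = e then 1 else 0) := by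
  induction t with
  | zero =>
    have := half_cell hm e
    simp only [mul_zero, not_lt_zero, if_false]
    refine this.cast ?_
    omega
  | succ t ih =>
    have h0 := ih (by omega)
    have h1 := full hm hme hc e (2 * t) (by omega) t (by omega) (by omega)
    have h2 := full hm hme hc e (2 * t + 1) (by omega) t (by omega) (by omega)
    refine (pentagon hm (2 * t) (2 * t + 1) (by omega)
      ![5 ^ t * c - h, 5 ^ t * c, 5 ^ t * c, 5 ^ t * c, 5 ^ t * c]
      ![fun i => if i < 2 * t then 2 else if i = e then 1 else 0,
        fun i => if i < 2 * t then 2 else if i = e ∨ i = 2 * t then 1 else 0,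
        fun i => if i < 2 * t then 2 else if i = e ∨ i = 2 * t + 1 then 1 else 0,
        fun i => if i < 2 * t then 2 else if i = e ∨ i = 2 * t + 1 then 1 else 0,
        fun i => if i < 2 * t then 2 else if i = e ∨ i = 2 * t then 1 else 0]
      _ ?_ ?_ ?_ ?_ ?_ ?_).cast ?_
    rotate_right
    · have : 1 ≤ 5 ^ t := Nat.one_le_pow _ _ (by norm_num)
      have : c ≤ 5 ^ t * c := Nat.le_mul_of_pos_left _ this
      simp [Fin.sum_univ_five, pow_succ]
      have e5 : 5 ^ t * 5 * c = 5 * (5 ^ t * c) := by ring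
      rw [e5]
      omega
    · intro a
      fin_cases a
      · exact h0
      · exact h1
      · exact h2
      · exact h2
      · exact h1
    · rw [if_pos (by omega)]
    · rw [if_pos (by omega)]
    · intro a i h1 h2
      fin_cases a <;> simp <;> split_ifs <;> omega
    · intro a
      fin_cases a <;> simp <;> omega
    · intro a
      fin_cases a <;> simp <;> omega

lemma main {m c h n : ℕ} (hm : 6 ≤ m) (hme : m % 2 = 0)
    (hc : (m % 4 = 0 ∧ c = m - 2) ∨ (m % 4 = 2 ∧ c = m - 1)) (hh : c = m / 2 + h)
    (h2 : Ex m n (fun i => if i < 2 then 2 else 0)) (j : ℕ) :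
    ∃ N, Ex m N (fun i => if i < 2 * (j + 1) then 2 else 0) ∧
      N + 5 * c + 4 * h * j = n + 5 * c * 5 ^ j := by
  induction j with
  | zero => exact ⟨n, h2, by simp⟩
  | succ j ih =>
    obtain ⟨N, h0, hN⟩ := ih
    have h1 := part hm hme hc hh (2 * (j + 1)) (j + 1) (by omega)
    have h2 := part hm hme hc hh (2 * (j + 1) + 1) (j + 1) (by omega)
    have hle : c ≤ 5 ^ (j + 1) * c := Nat.le_mul_of_pos_left _ (by positivity)
    refine ⟨_, pentagon hm (2 * (j + 1)) (2 * (j + 1) + 1) (by omega)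
      ![N, 5 ^ (j + 1) * c - h, 5 ^ (j + 1) * c - h, 5 ^ (j + 1) * c - h, 5 ^ (j + 1) * c - h]
      ![fun i => if i < 2 * (j + 1) then 2 else 0,
        fun i => if i < 2 * (j + 1) then 2 else if i = 2 * (j + 1) then 1 else 0,
        fun i => if i < 2 * (j + 1) then 2 else if i = 2 * (j + 1) + 1 then 1 else 0,
        fun i => if i < 2 * (j + 1) then 2 else if i = 2 * (j + 1) + 1 then 1 else 0,
        fun i => if i < 2 * (j + 1) then 2 else if i = 2 * (j + 1) then 1 else 0]
      _ ?_ ?_ ?_ ?_ ?_ ?_, ?_⟩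
    rotate_right
    · obtain ⟨D, hD⟩ : ∃ D, 5 ^ (j + 1) * c = D + h := ⟨5 ^ (j + 1) * c - h, by omega⟩
      simp only [Fin.sum_univ_five, hD]
      simp
      rw [pow_succ] at hD ⊢
      nlinarith
    · intro a
      fin_cases a
      · exact h0
      · exact h1
      · exact h2
      · exact h2
      · exact h1
    · rw [if_pos (by omega)]
    · rw [if_pos (by omega)]
    · intro a i h1 h2
      fin_cases a <;> simp <;> split_ifs <;> omega
    · intro a
      fin_cases a <;> simp
    · intro a
      fin_cases a <;> simp

/-- a monochromatic kipas in terms of centre and path -/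
lemma mono_iff {V : Type} {k m : ℕ} (χ : V → V → Fin k) (hs : ∀ x y, χ x y = χ y x) :
    IsMonoCopy (⊤ : SimpleGraph V) χ (kipasG m) ↔
    ∃ (i : Fin k) (v : V) (w : Fin m → V), Function.Injective w ∧
      (∀ j, w j ≠ v ∧ χ v (w j) = i) ∧
      ∀ j j' : Fin m, j'.val = j.val + 1 → χ (w j) (w j') = i := by
  constructor
  · rintro ⟨f, i, hf, h⟩
    refine ⟨i, f 0, fun j => f j.succ, ?_, ?_, ?_⟩
    · intro a b e
      exact Fin.succ_injective _ (hf e)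
    · intro j
      refine ⟨fun e => Fin.succ_ne_zero _ (hf e), (h 0 j.succ ?_).2⟩
      simp [kipasG, (Fin.succ_ne_zero _).symm]
    · intro j j' e
      refine (h j.succ j'.succ ?_).2
      rw [kipasG, SimpleGraph.fromRel_adj]
      refine ⟨?_, Or.inl (Or.inr ⟨by simp, by simp [e]⟩)⟩
      intro e'
      have := Fin.succ_injective _ e'
      rw [this] at e
      omega
  · rintro ⟨i, v, w, hw, hv, hc⟩
    have hinj : Function.Injective (Fin.cons v w : Fin (m + 1) → V) := by
      rw [Fin.cons_injective_iff]
      refine ⟨?_, hw⟩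
      rintro ⟨j, hj⟩
      exact (hv j).1 hj
    have hrel : ∀ a b : Fin (m + 1), a ≠ b → (a = 0 ∨ (1 ≤ a.val ∧ b.val = a.val + 1)) →
        χ ((Fin.cons v w : Fin (m + 1) → V) a) ((Fin.cons v w : Fin (m + 1) → V) b) = i := by
      intro a b hab h
      induction b using Fin.cases with
      | zero =>
        rcases h with h | h
        · exact absurd h hab
        · simp at h
      | succ b =>
        induction a using Fin.cases with
        | zero => simpa using (hv b).2
        | succ a =>
          rcases h with h | h
          · exact absurd h (Fin.succ_ne_zero _)
          · simp only [Fin.cons_succ]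
            apply hc
            simpa using h.2
    refine ⟨Fin.cons v w, i, hinj, ?_⟩
    intro a b hab
    rw [kipasG, SimpleGraph.fromRel_adj] at hab
    obtain ⟨hne, h⟩ := hab
    refine ⟨fun e => hne (hinj e), ?_⟩
    rcases h with h | h
    · exact hrel a b hne h
    · rw [hs]; exact hrel b a (Ne.symm hne) h

lemma toEx {m n : ℕ} (hm : 6 ≤ m)
    (h2 : ∃ χ : Fin n → Fin n → Fin 2, (∀ x y, χ x y = χ y x) ∧
      ¬ IsMonoCopy (⊤ : SimpleGraph (Fin n)) χ (kipasG m)) :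
    Ex m n (fun i => if i < 2 then 2 else 0) := by
  obtain ⟨χ, hs, h⟩ := h2
  rw [mono_iff _ hs] at h
  refine ⟨Fin n, inferInstance, fun x y => (χ x y).val, by simp, ?_, ?_, ?_⟩
  · intro x y; simp [hs x y]
  · intro x y z _ _ _
    have h1 := (χ x y).2
    have h2 := (χ y z).2
    have h3 := (χ x z).2
    simp only
    omega
  · intro i
    by_cases hi : i < 2
    · refine St.of_kf ?_ (by simp [hi])
      intro v w hw hv hc
      refine h ⟨⟨i, hi⟩, v, w, hw, ?_, ?_⟩
      · intro j
        exact ⟨(hv j).1, Fin.ext (hv j).2⟩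
      · intro j j' e
        exact Fin.ext (hc j j' e)
    · refine St.of_unused hm ?_
      intro x y _ e
      have := (χ x y).2
      simp only at e
      omega

lemma ofEx {m N k : ℕ} (hm : 6 ≤ m) (hk : 0 < k)
    (h : Ex m N (fun i => if i < k then 2 else 0)) :
    ∃ χ : Fin N → Fin N → Fin k, (∀ x y, χ x y = χ y x) ∧
      NoRainbowTriangle (⊤ : SimpleGraph (Fin N)) χ ∧
      ¬ IsMonoCopy (⊤ : SimpleGraph (Fin N)) χ (kipasG m) := by
  obtain ⟨V, hV, χ, hcard, hs, hg, hst⟩ := h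
  have φ : Fin N ≃ V := (Fintype.equivFinOfCardEq hcard).symm
  have hlt : ∀ x y, x ≠ y → χ x y < k := by
    intro x y hxy
    by_contra hn
    exact (hst (χ x y)).1 (by simp only [if_neg hn]) x y hxy rfl
  let χ' : Fin N → Fin N → Fin k := fun x y => ⟨χ (φ x) (φ y) % k, Nat.mod_lt _ hk⟩
  have hval : ∀ x y, x ≠ y → (χ' x y).val = χ (φ x) (φ y) := by
    intro x y hxy
    exact Nat.mod_eq_of_lt (hlt _ _ (fun e => hxy (φ.injective e)))
  have hs' : ∀ x y, χ' x y = χ' y x := by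
    intro x y; simp only [χ', hs (φ x) (φ y)]
  refine ⟨χ', hs', ?_, ?_⟩
  · rintro ⟨x, y, z, hxy, hyz, hxz, h1, h2, h3⟩
    rw [SimpleGraph.top_adj] at hxy hyz hxz
    have := hg (φ x) (φ y) (φ z) (fun e => hxy (φ.injective e)) (fun e => hyz (φ.injective e))
      (fun e => hxz (φ.injective e))
    rw [← hval _ _ hxy, ← hval _ _ hyz, ← hval _ _ hxz] at this
    rcases this with h | h | h
    · exact h1 (Fin.ext h)
    · exact h2 (Fin.ext h)
    · exact h3 (Fin.ext h)
  · rw [mono_iff _ hs']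
    rintro ⟨i, v, w, hw, hv, hc⟩
    refine (hst i.val).2.2 (φ v) (fun j => φ (w j)) (φ.injective.comp hw) ?_ ?_
    · intro j
      refine ⟨fun e => (hv j).1 (φ.injective e), ?_⟩
      rw [← hval _ _ (hv j).1.symm, (hv j).2]
    · intro j j' e
      have hne : w j ≠ w j' := by
        intro e'
        have := hw e'
        rw [this] at e
        omega
      simp only
      rw [← hval _ _ hne, hc j j' e]

/-- Ramsey's theorem with `k` colours. -/
lemma ramsey {k : ℕ} (s : ℕ) : ∀ g : Fin k → ℕ, ∑ i, g i = s → 0 < k →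
    ∃ N : ℕ, ∀ (V : Type) (χ : V → V → Fin k), (∀ x y, χ x y = χ y x) →
      ∀ S : Finset V, N ≤ S.card → ∃ (i : Fin k) (T : Finset V), T ⊆ S ∧ T.card = g i ∧
        ∀ x ∈ T, ∀ y ∈ T, x ≠ y → χ x y = i := by
  classical
  induction s with
  | zero =>
    intro g hg hk
    refine ⟨0, fun V χ _ S _ => ⟨⟨0, hk⟩, ∅, by simp, ?_, by simp⟩⟩
    have := (Finset.sum_eq_zero_iff.1 hg) ⟨0, hk⟩ (Finset.mem_univ _)
    simp [this]
  | succ s ih =>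
    intro g hg hk
    by_cases hz : ∃ i, g i = 0
    · obtain ⟨i, hi⟩ := hz
      exact ⟨0, fun V χ _ S _ => ⟨i, ∅, by simp, by simp [hi], by simp⟩⟩
    push Not at hz
    have hsub : ∀ i, ∑ j, Function.update g i (g i - 1) j = s := by
      intro i
      have h1 := Finset.sum_update_of_mem (Finset.mem_univ i) g (g i - 1)
      have h2 := Finset.add_sum_erase Finset.univ g (Finset.mem_univ i)
      rw [Finset.sdiff_singleton_eq_erase] at h1
      have := hz i
      omega
    choose N hN using fun i => ih _ (hsub i) hk
    refine ⟨∑ i, N i + 1, ?_⟩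
    intro V χ hs S hS
    obtain ⟨v, hv⟩ : S.Nonempty := Finset.card_pos.1 (by omega)
    have hex : ∃ i, N i ≤ ((S.erase v).filter (fun x => χ v x = i)).card := by
      by_contra hcon
      push Not at hcon
      have h1 : (S.erase v).card = ∑ i, ((S.erase v).filter (fun x => χ v x = i)).card :=
        Finset.card_eq_sum_card_fiberwise (fun _ _ => Finset.mem_coe.2 (Finset.mem_univ _))
      have h2 : ∑ i, ((S.erase v).filter (fun x => χ v x = i)).card < ∑ i, N i :=
        Finset.sum_lt_sum_of_nonempty ⟨⟨0, hk⟩, Finset.mem_univ _⟩ (fun i _ => hcon i)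
      rw [Finset.card_erase_of_mem hv] at h1
      omega
    obtain ⟨i, hi⟩ := hex
    obtain ⟨i', T, hTS, hT, hmono⟩ := hN i V χ hs _ hi
    by_cases hii : i' = i
    · subst hii
      refine ⟨i', insert v T, ?_, ?_, ?_⟩
      · intro x hx
        rcases Finset.mem_insert.1 hx with rfl | hx
        · exact hv
        · exact Finset.mem_of_mem_erase (Finset.mem_filter.1 (hTS hx)).1
      · have hvT : v ∉ T := fun h =>
          Finset.notMem_erase v S (Finset.mem_filter.1 (hTS h)).1
        rw [Finset.card_insert_of_notMem hvT, hT]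
        have := hz i'
        simp
        omega
      · intro x hx y hy hxy
        rcases Finset.mem_insert.1 hx with rfl | hx'
        · rcases Finset.mem_insert.1 hy with rfl | hy
          · exact absurd rfl hxy
          · exact (Finset.mem_filter.1 (hTS hy)).2
        · rcases Finset.mem_insert.1 hy with rfl | hy
          · rw [hs]; exact (Finset.mem_filter.1 (hTS hx')).2
          · exact hmono x hx' y hy hxy
    · refine ⟨i', T, ?_, ?_, hmono⟩
      · intro x hx
        exact Finset.mem_of_mem_erase (Finset.mem_filter.1 (hTS hx)).1
      · rw [hT, Function.update_of_ne hii]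

lemma GR_nonempty (k m : ℕ) (hk : 0 < k) :
    {N | ∀ c : Fin N → Fin N → Fin k, (∀ x y, c x y = c y x) →
    NoRainbowTriangle (⊤ : SimpleGraph (Fin N)) c →
    IsMonoCopy (⊤ : SimpleGraph (Fin N)) c (kipasG m)}.Nonempty := by
  obtain ⟨N, hN⟩ := ramsey (k := k) _ (fun _ => m + 1) rfl hk
  refine ⟨N, fun c hs _ => ?_⟩
  obtain ⟨i, T, _, hT, hmono⟩ := hN (Fin N) c hs Finset.univ (by simp)
  let f := T.orderEmbOfFin hT
  refine ⟨f, i, f.injective, ?_⟩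
  intro a b hab
  have hne : f a ≠ f b := fun e => hab.ne (f.injective e)
  exact ⟨hne, hmono _ (Finset.orderEmbOfFin_mem T hT a) _ (Finset.orderEmbOfFin_mem T hT b) hne⟩

lemma lt_GR {k m N : ℕ} (hk : 0 < k)
    (h : ∃ χ : Fin N → Fin N → Fin k, (∀ x y, χ x y = χ y x) ∧
      NoRainbowTriangle (⊤ : SimpleGraph (Fin N)) χ ∧
      ¬ IsMonoCopy (⊤ : SimpleGraph (Fin N)) χ (kipasG m)) :
    N < GallaiRamsey k (kipasG m) := by
  by_contra hle
  push Not at hle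
  obtain ⟨χ, hs, hr, hno⟩ := h
  have hmem := Nat.sInf_mem (GR_nonempty k m hk)
  change ∀ c : Fin (GallaiRamsey k (kipasG m)) → Fin (GallaiRamsey k (kipasG m)) → Fin k, _ at hmem
  obtain ⟨f, i, hf, h⟩ := hmem (fun x y => χ (Fin.castLE hle x) (Fin.castLE hle y))
    (fun x y => hs _ _) (by
      rintro ⟨x, y, z, hxy, hyz, hxz, hh⟩
      have hi := Fin.castLE_injective hle
      exact hr ⟨_, _, _, fun e => hxy (hi e), fun e => hyz (hi e), fun e => hxz (hi e), hh⟩)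
  refine hno ⟨fun a => Fin.castLE hle (f a), i, (Fin.castLE_injective hle).comp hf, ?_⟩
  intro a b hab
  exact ⟨fun e => (h a b hab).1 (Fin.castLE_injective hle e), (h a b hab).2⟩

lemma part1 (k m n c d : ℕ) (hk : 2 ≤ k) (hke : k % 2 = 0)
    (hm : 6 ≤ m) (hme : m % 2 = 0)
    (hcd : (m % 4 = 0 ∧ c = m - 2 ∧ d = m - 4) ∨ (m % 4 = 2 ∧ c = m - 1 ∧ d = m - 2))
    (h2 : ∃ χ : Fin n → Fin n → Fin 2, (∀ x y, χ x y = χ y x) ∧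
      ¬ IsMonoCopy (⊤ : SimpleGraph (Fin n)) χ (kipasG m)) :
    d * (k - 2) ≤ 5 * c * (5 ^ ((k - 2) / 2) - 1) ∧
    (∃ χ : Fin (n + 5 * c * (5 ^ ((k - 2) / 2) - 1) - d * (k - 2)) →
        Fin (n + 5 * c * (5 ^ ((k - 2) / 2) - 1) - d * (k - 2)) → Fin k,
      (∀ x y, χ x y = χ y x) ∧
      NoRainbowTriangle (⊤ : SimpleGraph (Fin (n + 5 * c * (5 ^ ((k - 2) / 2) - 1) - d * (k - 2)))) χ ∧
      ¬ IsMonoCopy (⊤ : SimpleGraph (Fin (n + 5 * c * (5 ^ ((k - 2) / 2) - 1) - d * (k - 2)))) χ (kipasG m)) := by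
  obtain ⟨j, rfl⟩ : ∃ j, k = 2 * (j + 1) := ⟨k / 2 - 1, by omega⟩
  obtain ⟨h, rfl⟩ : ∃ h, d = 2 * h := ⟨d / 2, by omega⟩
  have e1 : (2 * (j + 1) - 2) / 2 = j := by omega
  have e2 : 2 * (j + 1) - 2 = 2 * j := by omega
  obtain ⟨N, hN, hcount⟩ := main (c := c) (h := h) hm hme (by omega) (by omega) (toEx hm h2) j
  rw [e1, e2]
  obtain ⟨X, hX⟩ : ∃ X, 5 ^ j = X + 1 := ⟨5 ^ j - 1, by
    have : 1 ≤ 5 ^ j := Nat.one_le_pow _ _ (by norm_num)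
    omega⟩
  have hjX : j ≤ X := by
    have : j < 5 ^ j := Nat.lt_pow_self (by norm_num)
    omega
  have hhc : h ≤ c := by omega
  have e3 : 5 ^ j - 1 = X := by omega
  rw [hX] at hcount
  rw [e3]
  refine ⟨?_, ?_⟩
  · have := Nat.mul_le_mul hhc hjX
    nlinarith
  · have : n + 5 * c * X - 2 * h * (2 * j) = N := by
      have : n + 5 * c * X = N + 2 * h * (2 * j) := by nlinarith
      omega
    rw [this]
    exact ofEx hm (by omega) hN

end KipasAux

/-- Even `k ≥ 2`, even `m ≥ 6`: from a 2-coloring of `K_n` with no monochromatic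
kipas `K̂_m`, one gets a Gallai `k`-coloring of a larger complete graph with no
monochromatic `K̂_m`; consequently the Gallai–Ramsey lower bound. -/
theorem kipas_gallai_lower_even_k (k m n c d : ℕ) (hk : 2 ≤ k) (hke : k % 2 = 0)
    (hm : 6 ≤ m) (hme : m % 2 = 0)
    (hcd : (m % 4 = 0 ∧ c = m - 2 ∧ d = m - 4) ∨ (m % 4 = 2 ∧ c = m - 1 ∧ d = m - 2))
    (h2 : ∃ χ : Fin n → Fin n → Fin 2, (∀ x y, χ x y = χ y x) ∧
      ¬ IsMonoCopy (⊤ : SimpleGraph (Fin n)) χ (kipasG m)) :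
    (∃ χ : Fin (n + 5 * c * (5 ^ ((k - 2) / 2) - 1) - d * (k - 2)) →
        Fin (n + 5 * c * (5 ^ ((k - 2) / 2) - 1) - d * (k - 2)) → Fin k,
      (∀ x y, χ x y = χ y x) ∧
      NoRainbowTriangle (⊤ : SimpleGraph (Fin (n + 5 * c * (5 ^ ((k - 2) / 2) - 1) - d * (k - 2)))) χ ∧
      ¬ IsMonoCopy (⊤ : SimpleGraph (Fin (n + 5 * c * (5 ^ ((k - 2) / 2) - 1) - d * (k - 2)))) χ (kipasG m)) ∧
    Ramsey2 (kipasG m) + 5 * c * (5 ^ ((k - 2) / 2) - 1) - d * (k - 2) ≤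
      GallaiRamsey k (kipasG m) := by
  refine ⟨(KipasAux.part1 k m n c d hk hke hm hme hcd h2).2, ?_⟩
  rcases Nat.eq_zero_or_pos (Ramsey2 (kipasG m)) with h0 | h0
  · obtain ⟨-, h1⟩ := KipasAux.part1 k m 0 c d hk hke hm hme hcd
      ⟨fun x _ => x.elim0, fun x => x.elim0, by
        rintro ⟨f, _⟩
        exact (f 0).elim0⟩
    rw [h0]
    exact (KipasAux.lt_GR (by omega) h1).le
  · have hnot : Ramsey2 (kipasG m) - 1 ∉ {N | ∀ c : Fin N → Fin N → Fin 2,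
        (∀ x y, c x y = c y x) → IsMonoCopy (⊤ : SimpleGraph (Fin N)) c (kipasG m)} :=
      Nat.notMem_of_lt_sInf (by
        change Ramsey2 (kipasG m) - 1 < Ramsey2 (kipasG m)
        omega)
    simp only [Set.mem_setOf_eq] at hnot
    push Not at hnot
    obtain ⟨hle, h1⟩ := KipasAux.part1 k m _ c d hk hke hm hme hcd hnot
    have := KipasAux.lt_GR (by omega) h1
    omega
end

section
/- Let k ≥ 2 be even and let m ≥ 6 be even. Set c = m−2 and d = m−4 if m ≡ 0 (mod 4), and c = m−1 and d = m−2 if m ≡ 2 (mod 4). Suppose there exists an edge 2-coloring of the complete graph on n vertices with no monochromatic copy of the wheel W_m. Then there exists a Gallai k-coloring of the complete graph on n + 5c(5^((k−2)/2) − 1) − d(k−2) vertices with no monochromatic copy of W_m. Consequently GR_k(W_m) ≥ R_2(W_m) + 5c(5^((k−2)/2) − 1) − d(k−2). -/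
open SimpleGraph

namespace WG

def Sym (χ : ℕ → ℕ → ℕ) : Prop := ∀ x y, χ x y = χ y x

def Gal (S : Finset ℕ) (χ : ℕ → ℕ → ℕ) : Prop :=
  ∀ x ∈ S, ∀ y ∈ S, ∀ z ∈ S, x ≠ y → y ≠ z → x ≠ z →
    χ x y = χ y z ∨ χ y z = χ x z ∨ χ x y = χ x z

def Absent (S : Finset ℕ) (χ : ℕ → ℕ → ℕ) (i : ℕ) : Prop :=
  ∀ x ∈ S, ∀ y ∈ S, x ≠ y → χ x y ≠ i

/-- `r` is an `m`-cycle inside `S` of color `i`, indexed periodically. -/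
structure Cyc (m : ℕ) (S : Finset ℕ) (χ : ℕ → ℕ → ℕ) (i : ℕ) (r : ℕ → ℕ) : Prop where
  mem : ∀ t, r t ∈ S
  per : ∀ t, r (t + m) = r t
  inj : ∀ s < m, ∀ t < m, r s = r t → s = t
  ne : ∀ t, r t ≠ r (t + 1)
  col : ∀ t, χ (r t) (r (t + 1)) = i

def Wheel (m : ℕ) (S : Finset ℕ) (χ : ℕ → ℕ → ℕ) (i : ℕ) : Prop :=
  ∃ v ∈ S, ∃ r, Cyc m S χ i r ∧ ∀ t, v ≠ r t ∧ χ v (r t) = i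

structure BigDeg (m : ℕ) (S : Finset ℕ) (χ : ℕ → ℕ → ℕ) (i v : ℕ) (g : ℕ → ℕ) : Prop where
  memv : v ∈ S
  mem : ∀ t < m / 2, g t ∈ S
  inj : ∀ s < m / 2, ∀ t < m / 2, g s = g t → s = t
  ne : ∀ t < m / 2, v ≠ g t
  col : ∀ t < m / 2, χ v (g t) = i

def Small (m : ℕ) (S : Finset ℕ) (χ : ℕ → ℕ → ℕ) (i : ℕ) : Prop :=
  (∀ r, ¬ Cyc m S χ i r) ∧ ∀ v g, ¬ BigDeg m S χ i v g

lemma Absent.small {m : ℕ} (hm : 6 ≤ m) {S χ i} (h : Absent S χ i) : Small m S χ i := by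
  constructor
  · intro r hr
    exact h _ (hr.mem 0) _ (hr.mem 1) (hr.ne 0) (hr.col 0)
  · intro v g hg
    have : 0 < m / 2 := by omega
    exact h _ hg.memv _ (hg.mem 0 this) (hg.ne 0 this) (hg.col 0 this)

lemma Small.noWheel {m : ℕ} {S χ i} (h : Small m S χ i) : ¬ Wheel m S χ i := by
  rintro ⟨v, _, r, hr, _⟩
  exact h.1 r hr

lemma noCyc_of_card {m : ℕ} {S : Finset ℕ} {χ i} (h : S.card < m) (r) : ¬ Cyc m S χ i r := by
  intro hr
  have := Finset.card_le_card_of_injOn (s := Finset.range m) (t := S) r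
    (fun t _ => hr.mem t)
    (fun s hs t ht hst => hr.inj s (by simpa using hs) t (by simpa using ht) hst)
  simp at this
  omega

/-! ### Blow-ups of the pentagon -/

def pen (a b p q : ℕ) : ℕ := if (p + 1) % 5 = q ∨ (q + 1) % 5 = p then a else b

def bS (S : ℕ → Finset ℕ) : Finset ℕ :=
  (Finset.range 5).biUnion fun p => (S p).image (fun x => 5 * x + p)

def bχ (a b : ℕ) (χ : ℕ → ℕ → ℕ → ℕ) (u v : ℕ) : ℕ :=
  if u % 5 = v % 5 then χ (u % 5) (u / 5) (v / 5) else pen a b (u % 5) (v % 5)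

lemma mem_bS {S : ℕ → Finset ℕ} {u : ℕ} : u ∈ bS S ↔ u / 5 ∈ S (u % 5) := by
  simp only [bS, Finset.mem_biUnion, Finset.mem_range, Finset.mem_image]
  constructor
  · rintro ⟨p, hp, x, hx, rfl⟩
    have h1 : (5 * x + p) / 5 = x := by omega
    have h2 : (5 * x + p) % 5 = p := by omega
    rwa [h1, h2]
  · intro h
    exact ⟨u % 5, by omega, u / 5, h, by omega⟩

lemma card_bS (S : ℕ → Finset ℕ) : (bS S).card = ∑ p ∈ Finset.range 5, (S p).card := by
  rw [bS, Finset.card_biUnion]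
  · refine Finset.sum_congr rfl fun p _ => ?_
    exact Finset.card_image_of_injective _ (fun x y h => by simpa using h)
  · intro p hp q hq hpq
    rw [Function.onFun, Finset.disjoint_left]
    simp only [Finset.mem_image, Finset.mem_range, Finset.coe_range, Set.mem_Iio] at *
    rintro _ ⟨x, _, rfl⟩ ⟨y, _, h⟩
    omega

lemma pen_symm (a b p q : ℕ) : pen a b p q = pen a b q p := by
  unfold pen; simp only [or_comm]

lemma pen_or (a b p q : ℕ) : pen a b p q = a ∨ pen a b p q = b := by
  unfold pen; split_ifs <;> simp

lemma bχ_same {a b : ℕ} {χ : ℕ → ℕ → ℕ → ℕ} {u v : ℕ} (h : u % 5 = v % 5) :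
    bχ a b χ u v = χ (u % 5) (u / 5) (v / 5) := by simp [bχ, h]

lemma bχ_diff {a b : ℕ} {χ : ℕ → ℕ → ℕ → ℕ} {u v : ℕ} (h : u % 5 ≠ v % 5) :
    bχ a b χ u v = pen a b (u % 5) (v % 5) := by simp [bχ, h]

section blow
variable {a b : ℕ} {S : ℕ → Finset ℕ} {χ : ℕ → ℕ → ℕ → ℕ}

lemma bSym (h : ∀ p < 5, Sym (χ p)) : Sym (bχ a b χ) := by
  intro x y
  by_cases hxy : x % 5 = y % 5
  · rw [bχ_same hxy, bχ_same hxy.symm, ← hxy]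
    exact h _ (by omega) _ _
  · rw [bχ_diff hxy, bχ_diff (Ne.symm hxy), pen_symm]

lemma bGal (h : ∀ p < 5, Gal (S p) (χ p)) : Gal (bS S) (bχ a b χ) := by
  intro x hx y hy z hz hxy hyz hxz
  rw [mem_bS] at hx hy hz
  by_cases h1 : x % 5 = y % 5
  · by_cases h2 : y % 5 = z % 5
    · rw [bχ_same h1, bχ_same h2, bχ_same (h1.trans h2)]
      rw [← h2, ← h1] at hz
      rw [← h1] at hy
      rw [← h1]
      exact h _ (by omega) _ hx _ hy _ hz (by omega) (by omega) (by omega)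
    · right; left
      rw [bχ_diff h2, bχ_diff (by omega), h1]
  · by_cases h2 : y % 5 = z % 5
    · right; right
      rw [bχ_diff h1, bχ_diff (by omega), h2]
    · by_cases h3 : x % 5 = z % 5
      · left
        rw [bχ_diff h1, bχ_diff h2, h3, pen_symm]
      · rw [bχ_diff h1, bχ_diff h2, bχ_diff h3]
        rcases pen_or a b (x % 5) (y % 5) with e1 | e1 <;>
        rcases pen_or a b (y % 5) (z % 5) with e2 | e2 <;>
        rcases pen_or a b (x % 5) (z % 5) with e3 | e3 <;>
        simp [e1, e2, e3]

lemma bAbsent {i : ℕ} (ha : i ≠ a) (hb : i ≠ b) (h : ∀ p < 5, Absent (S p) (χ p) i) :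
    Absent (bS S) (bχ a b χ) i := by
  intro x hx y hy hxy he
  rw [mem_bS] at hx hy
  by_cases h1 : x % 5 = y % 5
  · rw [bχ_same h1] at he
    rw [← h1] at hy
    exact h _ (by omega) _ hx _ hy (by omega) he
  · rw [bχ_diff h1] at he
    rcases pen_or a b (x % 5) (y % 5) with e1 | e1 <;> omega

lemma const_of_step {r : ℕ → ℕ} (h : ∀ t, r (t + 1) % 5 = r t % 5) (t : ℕ) :
    r t % 5 = r 0 % 5 := by
  induction t with
  | zero => rfl
  | succ t ih => rw [h, ih]

lemma cyc_part {m i : ℕ} {r : ℕ → ℕ} (hr : Cyc m (bS S) (bχ a b χ) i r) {p : ℕ}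
    (hp : ∀ t, r t % 5 = p) : Cyc m (S p) (χ p) i (fun t => r t / 5) where
  mem t := by have := mem_bS.1 (hr.mem t); rwa [hp] at this
  per t := by simp [hr.per]
  inj s hs t ht h := hr.inj s hs t ht (by have := hp s; have := hp t; omega)
  ne t := by
    have := hp t; have := hp (t + 1); have := hr.ne t
    intro h; apply this; omega
  col t := by
    have h := hr.col t
    rw [bχ_same (by rw [hp, hp]), hp] at h
    exact h

lemma same_of_col {i : ℕ} (ha : i ≠ a) (hb : i ≠ b) {u v : ℕ} (h : bχ a b χ u v = i) :
    u % 5 = v % 5 := by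
  by_contra h1
  rw [bχ_diff h1] at h
  rcases pen_or a b (u % 5) (v % 5) with e1 | e1 <;> omega

lemma bSmall {m i : ℕ} (ha : i ≠ a) (hb : i ≠ b) (h : ∀ p < 5, Small m (S p) (χ p) i) :
    Small m (bS S) (bχ a b χ) i := by
  constructor
  · intro r hr
    have hc := const_of_step (r := r) (fun t => (same_of_col ha hb (hr.col t)).symm)
    exact (h _ (by omega)).1 _ (cyc_part hr hc)
  · intro v g hg
    have hs : ∀ t < m / 2, v % 5 = g t % 5 := fun t ht => same_of_col ha hb (hg.col t ht)
    refine (h (v % 5) (by omega)).2 (v / 5) (fun t => g t / 5) ⟨mem_bS.1 hg.memv, ?_, ?_, ?_, ?_⟩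
    · intro t ht
      have := mem_bS.1 (hg.mem t ht)
      rwa [← hs t ht] at this
    · intro s hs' t ht e
      have := hs s hs'; have := hs t ht
      exact hg.inj s hs' t ht (by omega)
    · intro t ht e
      have := hs t ht
      exact hg.ne t ht (by omega)
    · intro t ht
      have := hg.col t ht
      rwa [bχ_same (hs t ht)] at this

lemma bWheel {m i : ℕ} (ha : i ≠ a) (hb : i ≠ b) (h : ∀ p < 5, ¬ Wheel m (S p) (χ p) i) :
    ¬ Wheel m (bS S) (bχ a b χ) i := by
  rintro ⟨v, hv, r, hr, hvr⟩
  have hs : ∀ t, r t % 5 = v % 5 := fun t => (same_of_col ha hb (hvr t).2).symm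
  refine h (v % 5) (by omega) ⟨v / 5, mem_bS.1 hv, _, cyc_part hr hs, fun t => ⟨?_, ?_⟩⟩
  · have := hs t; have := (hvr t).1
    omega
  · have := (hvr t).2
    rwa [bχ_same (hs t).symm] at this

/-- The key step: a color of the pentagon, used sparsely inside two nonadjacent parts. -/
lemma bKey {m i : ℕ} (hm : 6 ≤ m) (hme : m % 2 = 0) (sp : ℕ → Prop)
    (hsp : ∀ p < 5, ∀ q < 5, sp p → sp q → p ≠ q → pen a b p q ≠ i)
    (htri : ∀ p < 5, ∀ q < 5, ∀ s < 5, p ≠ q → q ≠ s → p ≠ s →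
      pen a b p q = i → pen a b q s = i → pen a b p s ≠ i)
    (hab : ∀ p < 5, ¬ sp p → Absent (S p) (χ p) i)
    (hsm : ∀ p < 5, Small m (S p) (χ p) i) :
    ¬ Wheel m (bS S) (bχ a b χ) i := by
  rintro ⟨v, hv, r, hr, hvr⟩
  have step : ∀ t, r t % 5 ≠ v % 5 → r (t + 1) % 5 ≠ v % 5 → r (t + 1) % 5 = r t % 5 := by
    intro t h1 h2
    by_contra h3
    have e1 := (hvr t).2
    have e2 := (hvr (t + 1)).2
    have e3 := hr.col t
    rw [bχ_diff (Ne.symm h1)] at e1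
    rw [bχ_diff (Ne.symm h2)] at e2
    rw [bχ_diff (Ne.symm h3)] at e3
    exact htri _ (by omega) _ (by omega) _ (by omega) (Ne.symm h1) (Ne.symm h3) (Ne.symm h2) e1 e3 e2
  by_cases hspv : sp (v % 5)
  · have touch : ∀ t, r t % 5 = v % 5 ∨ r (t + 1) % 5 = v % 5 := by
      intro t
      by_contra! hcon
      obtain ⟨h1, h2⟩ := hcon
      have h3 := step t h1 h2
      have e1 := (hvr t).2
      rw [bχ_diff (Ne.symm h1)] at e1
      have hns : ¬ sp (r t % 5) := fun hs =>
        hsp _ (by omega) _ (by omega) hspv hs (Ne.symm h1) e1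
      have e3 := hr.col t
      rw [bχ_same h3.symm] at e3
      have m1 := mem_bS.1 (hr.mem t)
      have m2 := mem_bS.1 (hr.mem (t + 1))
      rw [h3] at m2
      have := hr.ne t
      exact hab _ (by omega) hns _ m1 _ m2 (by omega) e3
    have : ∀ t, ∃ s, (s = 2 * t ∨ s = 2 * t + 1) ∧ r s % 5 = v % 5 := by
      intro t
      rcases touch (2 * t) with h | h
      · exact ⟨_, Or.inl rfl, h⟩
      · exact ⟨_, Or.inr rfl, h⟩
    choose f hf hfv using this
    refine (hsm (v % 5) (by omega)).2 (v / 5) (fun t => r (f t) / 5)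
      ⟨mem_bS.1 hv, ?_, ?_, ?_, ?_⟩
    · intro t ht
      have := mem_bS.1 (hr.mem (f t))
      rwa [hfv] at this
    · intro s hs t ht e
      have e1 := hfv s
      have e2 := hfv t
      have h1 := hf s
      have h2 := hf t
      have := hr.inj (f s) (by omega) (f t) (by omega) (by omega)
      omega
    · intro t ht e
      have := hfv t
      exact (hvr (f t)).1 (by omega)
    · intro t ht
      have := (hvr (f t)).2
      rwa [bχ_same (hfv t).symm] at this
  · have hne : ∀ t, r t % 5 ≠ v % 5 := by
      intro t h
      have e := (hvr t).2
      rw [bχ_same h.symm] at e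
      have m1 := mem_bS.1 (hr.mem t)
      rw [h] at m1
      have := (hvr t).1
      exact hab _ (by omega) hspv _ (mem_bS.1 hv) _ m1 (by omega) e
    have hc := const_of_step (r := r) (fun t => step t (hne t) (hne (t + 1)))
    exact (hsm _ (by omega)).1 _ (cyc_part hr hc)

end blow

lemma pen_eq_a {a b p q : ℕ} (hab : a ≠ b) :
    pen a b p q = a ↔ ((p + 1) % 5 = q ∨ (q + 1) % 5 = p) := by
  unfold pen; split_ifs with h <;> simp [h, hab.symm]

lemma pen_eq_b {a b p q : ℕ} (hab : a ≠ b) :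
    pen a b p q = b ↔ ¬ ((p + 1) % 5 = q ∨ (q + 1) % 5 = p) := by
  unfold pen; split_ifs with h <;> simp [h, hab]

def sel {α : Type} (x y z : α) (p : ℕ) : α :=
  if p = 0 then x else if p = 1 ∨ p = 4 then y else z

lemma blowup {m : ℕ} (hm : 6 ≤ m) (hme : m % 2 = 0) {a b : ℕ} (hab : a ≠ b)
    {S0 S1 S2 : Finset ℕ} {χ0 χ1 χ2 : ℕ → ℕ → ℕ}
    (s0 : Sym χ0) (s1 : Sym χ1) (s2 : Sym χ2)
    (g0 : Gal S0 χ0) (g1 : Gal S1 χ1) (g2 : Gal S2 χ2)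
    (a0 : Absent S0 χ0 a) (a1 : Small m S1 χ1 a) (a2 : Absent S2 χ2 a)
    (b0 : Absent S0 χ0 b) (b1 : Absent S1 χ1 b) (b2 : Small m S2 χ2 b) :
    ∃ S χ, Sym χ ∧ Gal S χ ∧ S.card = S0.card + 2 * S1.card + 2 * S2.card ∧
      ¬ Wheel m S χ a ∧ ¬ Wheel m S χ b ∧
      ∀ i, i ≠ a → i ≠ b →
        ((¬ Wheel m S0 χ0 i → ¬ Wheel m S1 χ1 i → ¬ Wheel m S2 χ2 i → ¬ Wheel m S χ i) ∧
        (Small m S0 χ0 i → Small m S1 χ1 i → Small m S2 χ2 i → Small m S χ i) ∧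
        (Absent S0 χ0 i → Absent S1 χ1 i → Absent S2 χ2 i → Absent S χ i)) := by
  have key : ∀ (P : Finset ℕ → (ℕ → ℕ → ℕ) → Prop), P S0 χ0 → P S1 χ1 → P S2 χ2 →
      ∀ p < 5, P (sel S0 S1 S2 p) (sel χ0 χ1 χ2 p) := by
    intro P h0 h1 h2 p hp
    unfold sel
    split_ifs <;> assumption
  refine ⟨bS (sel S0 S1 S2), bχ a b (sel χ0 χ1 χ2), bSym (key (fun _ χ => Sym χ) s0 s1 s2),
    bGal (key Gal g0 g1 g2), ?_, ?_, ?_, ?_⟩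
  · rw [card_bS]
    simp [Finset.sum_range_succ, sel]
    ring
  · refine bKey hm hme (fun p => p = 1 ∨ p = 4) ?_ ?_ ?_ ?_
    · intro p _ q _ hp hq hpq
      rw [Ne, pen_eq_a hab]
      omega
    · intro p _ q _ s _ h1 h2 h3
      rw [Ne, pen_eq_a hab, pen_eq_a hab, pen_eq_a hab]
      omega
    · intro p _ hp
      unfold sel
      split_ifs <;> assumption
    · exact key (fun S χ => Small m S χ a) (a0.small hm) a1 (a2.small hm)
  · refine bKey hm hme (fun p => p = 2 ∨ p = 3) ?_ ?_ ?_ ?_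
    · intro p _ q _ hp hq hpq
      rw [Ne, pen_eq_b hab]
      omega
    · intro p _ q _ s _ h1 h2 h3
      rw [Ne, pen_eq_b hab, pen_eq_b hab, pen_eq_b hab]
      omega
    · intro p _ hp
      unfold sel
      split_ifs
      · assumption
      · assumption
      · omega
    · exact key (fun S χ => Small m S χ b) (b0.small hm) (b1.small hm) b2
  · intro i ha hb
    exact ⟨fun h0 h1 h2 => bWheel ha hb (key (fun S χ => ¬ Wheel m S χ i) h0 h1 h2),
      fun h0 h1 h2 => bSmall ha hb (key (fun S χ => Small m S χ i) h0 h1 h2),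
      fun h0 h1 h2 => bAbsent ha hb (key (fun S χ => Absent S χ i) h0 h1 h2)⟩

/-! ### The building blocks -/

def dist' (x y : ℕ) : ℕ := (x - y) + (y - x)

def circ (c e f x y : ℕ) : ℕ := if dist' x y ≤ c / 4 ∨ c - c / 4 ≤ dist' x y then e else f

lemma deg_bound {m c : ℕ} {S : Finset ℕ} {χ i v g} (hS : S = Finset.range c)
    (h : BigDeg m S χ i v g) (T : Finset ℕ) (hT : T.card < m / 2)
    (hmap : ∀ y < c, v ≠ y → v < c → χ v y = i → (if v ≤ y then y - v else y + c - v) ∈ T) :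
    False := by
  subst hS
  have hv : v < c := by simpa using h.memv
  have hg : ∀ t < m / 2, g t < c := fun t ht => by simpa using h.mem t ht
  have := Finset.card_le_card_of_injOn (s := Finset.range (m / 2)) (t := T)
    (fun t => if v ≤ g t then g t - v else g t + c - v)
    (fun t ht => by
      have ht : t < m / 2 := by simpa using ht
      exact hmap _ (hg t ht) (h.ne t ht) hv (h.col t ht))
    (fun s hs t ht hst => by
      have hs : s < m / 2 := by simpa using hs
      have ht : t < m / 2 := by simpa using ht
      have h1 := hg s hs
      have h2 := hg t ht
      refine h.inj s hs t ht ?_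
      dsimp only at hst
      split_ifs at hst <;> omega)
  simp at this
  omega

lemma baseY {m c d : ℕ} (hm : 6 ≤ m)
    (hcd : (m % 4 = 0 ∧ c = m - 2 ∧ d = m - 4) ∨ (m % 4 = 2 ∧ c = m - 1 ∧ d = m - 2))
    {e f : ℕ} (hef : e ≠ f) :
    ∃ S χ, Sym χ ∧ Gal S χ ∧ S.card = c ∧ Small m S χ e ∧ Small m S χ f ∧
      ∀ i, i ≠ e → i ≠ f → Absent S χ i := by
  have hor : ∀ x y, circ c e f x y = e ∨ circ c e f x y = f := by
    intro x y; unfold circ; split_ifs <;> simp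
  refine ⟨Finset.range c, circ c e f, ?_, ?_, by simp, ?_, ?_, ?_⟩
  · intro x y
    have : dist' x y = dist' y x := by unfold dist'; omega
    simp [circ, this]
  · intro x _ y _ z _ _ _ _
    have h1 := hor x y; have h2 := hor y z; have h3 := hor x z
    omega
  · refine ⟨noCyc_of_card (by simp; omega), fun v g h => ?_⟩
    refine deg_bound rfl h (Finset.Icc 1 (c / 4) ∪ Finset.Icc (c - c / 4) (c - 1)) ?_ ?_
    · refine lt_of_le_of_lt (Finset.card_union_le _ _) ?_
      simp only [Nat.card_Icc]
      omega
    · intro y hy hvy hv hc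
      have : dist' v y ≤ c / 4 ∨ c - c / 4 ≤ dist' v y := by
        by_contra hcon
        simp only [circ, hcon, if_false] at hc
        exact hef hc.symm
      unfold dist' at this
      simp only [Finset.mem_union, Finset.mem_Icc]
      split_ifs <;> omega
  · refine ⟨noCyc_of_card (by simp; omega), fun v g h => ?_⟩
    refine deg_bound rfl h (Finset.Icc (c / 4 + 1) (c - c / 4 - 1)) ?_ ?_
    · simp only [Nat.card_Icc]
      omega
    · intro y hy hvy hv hc
      have : ¬ (dist' v y ≤ c / 4 ∨ c - c / 4 ≤ dist' v y) := by
        intro hcon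
        simp only [circ, hcon, if_true] at hc
        exact hef hc
      unfold dist' at this
      simp only [Finset.mem_Icc]
      split_ifs <;> omega
  · intro i hi1 hi2 x _ y _ _
    have := hor x y
    omega

lemma exY {m c d : ℕ} (hm : 6 ≤ m) (hme : m % 2 = 0)
    (hcd : (m % 4 = 0 ∧ c = m - 2 ∧ d = m - 4) ∨ (m % 4 = 2 ∧ c = m - 1 ∧ d = m - 2))
    (j : ℕ) : ∀ {e f : ℕ}, e ≠ f → 2 * j ≤ e → 2 * j ≤ f →
    ∃ S χ, Sym χ ∧ Gal S χ ∧ S.card = c * 5 ^ j ∧ (∀ i < 2 * j, ¬ Wheel m S χ i) ∧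
      Small m S χ e ∧ Small m S χ f ∧
      ∀ i, 2 * j ≤ i → i ≠ e → i ≠ f → Absent S χ i := by
  induction j with
  | zero =>
    intro e f hef _ _
    obtain ⟨S, χ, h1, h2, h3, h4, h5, h6⟩ := baseY hm hcd hef
    exact ⟨S, χ, h1, h2, by simpa using h3, by simp, h4, h5, fun i _ => h6 i⟩
  | succ j ih =>
    intro e f hef he hf
    obtain ⟨S, χ, h1, h2, h3, h4, h5, h6, h7⟩ := ih hef (by omega) (by omega)
    have ha := h7 (2 * j) (by omega) (by omega) (by omega)
    have hb := h7 (2 * j + 1) (by omega) (by omega) (by omega)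
    obtain ⟨S', χ', k1, k2, k3, k4, k5, k6⟩ := blowup hm hme
      (show 2 * j ≠ 2 * j + 1 by omega) h1 h1 h1 h2 h2 h2 ha (ha.small hm) ha hb hb (hb.small hm)
    refine ⟨S', χ', k1, k2, ?_, ?_, ?_, ?_, ?_⟩
    · rw [k3, h3]; ring
    · intro i hi
      by_cases e1 : i = 2 * j
      · rwa [e1]
      by_cases e2 : i = 2 * j + 1
      · rwa [e2]
      have := h4 i (by omega)
      exact (k6 i e1 e2).1 this this this
    · exact (k6 e (by omega) (by omega)).2.1 h5 h5 h5
    · exact (k6 f (by omega) (by omega)).2.1 h6 h6 h6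
    · intro i hi hie hif
      have := h7 i (by omega) hie hif
      exact (k6 i (by omega) (by omega)).2.2 this this this

lemma exX {m c d : ℕ} (hm : 6 ≤ m) (hme : m % 2 = 0)
    (hcd : (m % 4 = 0 ∧ c = m - 2 ∧ d = m - 4) ∨ (m % 4 = 2 ∧ c = m - 1 ∧ d = m - 2))
    (j : ℕ) : ∀ {e : ℕ}, 2 * j ≤ e →
    ∃ S χ, Sym χ ∧ Gal S χ ∧ 2 * S.card + d = 2 * (c * 5 ^ j) ∧ (∀ i < 2 * j, ¬ Wheel m S χ i) ∧
      Small m S χ e ∧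
      ∀ i, 2 * j ≤ i → i ≠ e → Absent S χ i := by
  induction j with
  | zero =>
    intro e _
    refine ⟨Finset.range (m / 2), fun _ _ => e, fun _ _ => rfl, fun _ _ _ _ _ _ _ _ _ => Or.inl rfl,
      ?_, by simp, ⟨noCyc_of_card (by simp; omega), fun v g h => ?_⟩, ?_⟩
    · simp; omega
    · refine deg_bound rfl h (Finset.Icc 1 (m / 2 - 1)) (by simp; omega) ?_
      intro y hy hvy hv _
      simp only [Finset.mem_Icc]
      split_ifs <;> omega
    · intro i _ hi x _ y _ _
      exact hi.symm
  | succ j ih =>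
    intro e he
    obtain ⟨S, χ, h1, h2, h3, h4, h5, h6⟩ := ih (e := e) (by omega)
    obtain ⟨S1, χ1, p1, p2, p3, p4, p5, p6, p7⟩ := exY hm hme hcd j
      (show 2 * j ≠ e by omega) (by omega) (by omega)
    obtain ⟨S2, χ2, q1, q2, q3, q4, q5, q6, q7⟩ := exY hm hme hcd j
      (show 2 * j + 1 ≠ e by omega) (by omega) (by omega)
    obtain ⟨S', χ', k1, k2, k3, k4, k5, k6⟩ := blowup hm hme
      (show 2 * j ≠ 2 * j + 1 by omega) h1 p1 q1 h2 p2 q2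
      (h6 _ (by omega) (by omega)) p5 (q7 _ (by omega) (by omega) (by omega))
      (h6 _ (by omega) (by omega)) (p7 _ (by omega) (by omega) (by omega)) q5
    refine ⟨S', χ', k1, k2, ?_, ?_, ?_, ?_⟩
    · rw [k3, p3, q3, pow_succ, ← mul_assoc c (5 ^ j) 5]
      generalize c * 5 ^ j = P at *
      omega
    · intro i hi
      by_cases e1 : i = 2 * j
      · rwa [e1]
      by_cases e2 : i = 2 * j + 1
      · rwa [e2]
      exact (k6 i e1 e2).1 (h4 i (by omega)) (p4 i (by omega)) (q4 i (by omega))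
    · exact (k6 e (by omega) (by omega)).2.1 h5 p6 q6
    · intro i hi hie
      exact (k6 i (by omega) (by omega)).2.2 (h6 i (by omega) hie)
        (p7 i (by omega) (by omega) (by omega)) (q7 i (by omega) (by omega) (by omega))

lemma exG {m c d n : ℕ} (hm : 6 ≤ m) (hme : m % 2 = 0)
    (hcd : (m % 4 = 0 ∧ c = m - 2 ∧ d = m - 4) ∨ (m % 4 = 2 ∧ c = m - 1 ∧ d = m - 2))
    (h0 : ∃ S χ, Sym χ ∧ Gal S χ ∧ S.card = n ∧ (∀ i < 2, ¬ Wheel m S χ i) ∧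
      ∀ i, 2 ≤ i → Absent S χ i) (j : ℕ) :
    ∃ S χ, Sym χ ∧ Gal S χ ∧ S.card + d * (2 * j) + 5 * c = n + 5 * c * 5 ^ j ∧
      (∀ i < 2 * j + 2, ¬ Wheel m S χ i) ∧ ∀ i, 2 * j + 2 ≤ i → Absent S χ i := by
  induction j with
  | zero =>
    obtain ⟨S, χ, h1, h2, h3, h4, h5⟩ := h0
    exact ⟨S, χ, h1, h2, by simp [h3], by simpa using h4, by simpa using h5⟩
  | succ j ih =>
    obtain ⟨S, χ, h1, h2, h3, h4, h5⟩ := ih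
    obtain ⟨S1, χ1, p1, p2, p3, p4, p5, p6⟩ := exX hm hme hcd (j + 1)
      (show 2 * (j + 1) ≤ 2 * j + 2 by omega)
    obtain ⟨S2, χ2, q1, q2, q3, q4, q5, q6⟩ := exX hm hme hcd (j + 1)
      (show 2 * (j + 1) ≤ 2 * j + 3 by omega)
    obtain ⟨S', χ', k1, k2, k3, k4, k5, k6⟩ := blowup hm hme
      (show 2 * j + 2 ≠ 2 * j + 3 by omega) h1 p1 q1 h2 p2 q2
      (h5 _ (by omega)) p5 (q6 _ (by omega) (by omega))
      (h5 _ (by omega)) (p6 _ (by omega) (by omega)) q5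
    refine ⟨S', χ', k1, k2, ?_, ?_, ?_⟩
    · rw [k3]
      rw [pow_succ] at *
      generalize 5 ^ j = P at *
      nlinarith
    · intro i hi
      by_cases e1 : i = 2 * j + 2
      · rwa [e1]
      by_cases e2 : i = 2 * j + 3
      · rwa [e2]
      exact (k6 i e1 e2).1 (h4 i (by omega)) (p4 i (by omega)) (q4 i (by omega))
    · intro i hi
      exact (k6 i (by omega) (by omega)).2.2 (h5 i (by omega))
        (p6 i (by omega) (by omega)) (q6 i (by omega) (by omega))

/-! ### Translation -/

lemma wheel_adj_zero {m : ℕ} {b : Fin (m + 1)} (hb : b.val ≠ 0) : (wheelG m).Adj 0 b := by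
  rw [wheelG, SimpleGraph.fromRel_adj]
  refine ⟨?_, Or.inl (Or.inl rfl)⟩
  rintro rfl
  simp at hb

lemma base_of_fin {m n : ℕ} (hm : 6 ≤ m)
    (h2 : ∃ χ : Fin n → Fin n → Fin 2, (∀ x y, χ x y = χ y x) ∧
      ¬ IsMonoCopy (⊤ : SimpleGraph (Fin n)) χ (wheelG m)) :
    ∃ S χ, Sym χ ∧ Gal S χ ∧ S.card = n ∧ (∀ i < 2, ¬ Wheel m S χ i) ∧
      ∀ i, 2 ≤ i → Absent S χ i := by
  obtain ⟨χ, hs, hw⟩ := h2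
  set ψ : ℕ → ℕ → ℕ := fun x y => if h : x < n ∧ y < n then (χ ⟨x, h.1⟩ ⟨y, h.2⟩).val else 0
    with hψ
  have hlt : ∀ x y, ψ x y < 2 := by
    intro x y
    simp only [hψ]
    split_ifs <;> omega
  have hval : ∀ (x y : Fin n), ψ x.val y.val = (χ x y).val := by
    intro x y; simp [hψ]
  refine ⟨Finset.range n, ψ, ?_, ?_, by simp, ?_, ?_⟩
  · intro x y
    by_cases hx : x < n <;> by_cases hy : y < n <;> simp [hψ, hx, hy]
    rw [hs]
  · intro x _ y _ z _ _ _ _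
    have h1 := hlt x y; have h2 := hlt y z; have h3 := hlt x z
    omega
  · rintro i hi ⟨v, hv, r, hr, hvr⟩
    apply hw
    have hv : v < n := by simpa using hv
    have hrn : ∀ t, r t < n := fun t => by simpa using hr.mem t
    set f : Fin (m + 1) → Fin n := fun a => if a.val = 0 then ⟨v, hv⟩ else ⟨r (a.val - 1), hrn _⟩
      with hf
    have f0 : ∀ a, a.val = 0 → (f a).val = v := by
      intro a h
      simp only [hf, h, if_true]
    have f1 : ∀ a, a.val ≠ 0 → (f a).val = r (a.val - 1) := by
      intro a h
      simp only [hf, h, if_false]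
    have finj : Function.Injective f := by
      intro a b hab
      have hab' : (f a).val = (f b).val := by rw [hab]
      by_cases ha : a.val = 0 <;> by_cases hb : b.val = 0
      · exact Fin.ext (by omega)
      · rw [f0 a ha, f1 b hb] at hab'
        exact absurd hab' (hvr _).1
      · rw [f1 a ha, f0 b hb] at hab'
        exact absurd hab'.symm (hvr _).1
      · rw [f1 a ha, f1 b hb] at hab'
        have := hr.inj _ (by omega) _ (by omega) hab'
        exact Fin.ext (by omega)
    have rel : ∀ a b : Fin (m + 1), a ≠ b →
        (a = 0 ∨ (1 ≤ a.val ∧ b.val = a.val + 1) ∨ (a.val = m ∧ b.val = 1)) →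
        χ (f a) (f b) = ⟨i, hi⟩ := by
      intro a b hab h
      apply Fin.ext
      rw [← hval]
      rcases h with rfl | ⟨h1, h2⟩ | ⟨h1, h2⟩
      · have hb : b.val ≠ 0 := fun h => hab (Fin.ext (by simp [h]))
        rw [f0 0 rfl, f1 b hb]
        exact (hvr _).2
      · rw [f1 a (by omega), f1 b (by omega), h2]
        have := hr.col (a.val - 1)
        rwa [show a.val - 1 + 1 = a.val + 1 - 1 by omega] at this
      · rw [f1 a (by omega), f1 b (by omega), h1, h2]
        have := hr.col (m - 1)
        rw [show m - 1 + 1 = 0 + m by omega, hr.per] at this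
        exact this
    refine ⟨f, ⟨i, hi⟩, finj, ?_⟩
    intro a b hab
    rw [wheelG, SimpleGraph.fromRel_adj] at hab
    obtain ⟨hne, h | h⟩ := hab
    · exact ⟨by simpa using finj.ne hne, rel a b hne h⟩
    · exact ⟨by simpa using finj.ne hne, by rw [hs]; exact rel b a hne.symm h⟩
  · intro i hi x _ y _ _
    have := hlt x y
    omega

lemma fin_of_set {m k N : ℕ} (hm : 6 ≤ m) (hk : 0 < k) {S : Finset ℕ} {χ : ℕ → ℕ → ℕ}
    (hs : Sym χ) (hg : Gal S χ) (hN : N ≤ S.card) (hw : ∀ i < k, ¬ Wheel m S χ i)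
    (ha : ∀ i, k ≤ i → Absent S χ i) :
    ∃ ψ : Fin N → Fin N → Fin k, (∀ x y, ψ x y = ψ y x) ∧
      NoRainbowTriangle (⊤ : SimpleGraph (Fin N)) ψ ∧
      ¬ IsMonoCopy (⊤ : SimpleGraph (Fin N)) ψ (wheelG m) := by
  obtain ⟨e, he, hmem⟩ : ∃ e : Fin N → ℕ, Function.Injective e ∧ ∀ x, e x ∈ S :=
    ⟨fun x => S.orderEmbOfFin rfl (Fin.castLE hN x),
      fun x y h => by simpa using h, fun x => S.orderEmbOfFin_mem rfl _⟩
  have hlt : ∀ x y, x ≠ y → χ (e x) (e y) < k := by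
    intro x y hxy
    by_contra hcon
    exact ha _ (by omega) _ (hmem x) _ (hmem y) (he.ne hxy) rfl
  set ψ : Fin N → Fin N → Fin k :=
    fun x y => if h : χ (e x) (e y) < k then ⟨χ (e x) (e y), h⟩ else ⟨0, hk⟩ with hψ
  have hval : ∀ x y, x ≠ y → (ψ x y).val = χ (e x) (e y) := by
    intro x y hxy
    simp [hψ, hlt x y hxy]
  refine ⟨ψ, ?_, ?_, ?_⟩
  · intro x y
    simp only [hψ, hs (e x) (e y)]
  · rintro ⟨x, y, z, hxy, hyz, hxz, h1, h2, h3⟩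
    simp only [SimpleGraph.top_adj] at hxy hyz hxz
    rw [Ne, Fin.ext_iff, hval _ _ hxy, hval _ _ hyz] at h1
    rw [Ne, Fin.ext_iff, hval _ _ hyz, hval _ _ hxz] at h2
    rw [Ne, Fin.ext_iff, hval _ _ hxy, hval _ _ hxz] at h3
    rcases hg _ (hmem x) _ (hmem y) _ (hmem z) (he.ne hxy) (he.ne hyz) (he.ne hxz) with h | h | h
    · exact h1 h
    · exact h2 h
    · exact h3 h
  · rintro ⟨f, i, finj, hf⟩
    have hf' : ∀ a b, (wheelG m).Adj a b → e (f a) ≠ e (f b) ∧ χ (e (f a)) (e (f b)) = i.val := by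
      intro a b hab
      obtain ⟨h1, h2⟩ := hf a b hab
      simp only [SimpleGraph.top_adj] at h1
      exact ⟨he.ne h1, by rw [← hval _ _ h1, h2]⟩
    have hmod : ∀ t, t % m < m := fun t => Nat.mod_lt _ (by omega)
    set g : ℕ → Fin (m + 1) := fun t => ⟨t % m + 1, by have := hmod t; omega⟩ with hgdef
    have hadj : ∀ t, (wheelG m).Adj (g t) (g (t + 1)) := by
      intro t
      have h1 := hmod t
      have h2 : (t + 1) % m = if t % m + 1 = m then 0 else t % m + 1 := by
        split_ifs with h
        · rw [Nat.add_mod, Nat.mod_eq_of_lt (show 1 < m by omega), h, Nat.mod_self]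
        · rw [Nat.add_mod, Nat.mod_eq_of_lt (show 1 < m by omega), Nat.mod_eq_of_lt (by omega)]
      rw [wheelG, SimpleGraph.fromRel_adj]
      refine ⟨?_, Or.inl (Or.inr ?_)⟩
      · intro h
        have h : t % m + 1 = (t + 1) % m + 1 := congrArg Fin.val h
        rw [h2] at h
        split_ifs at h <;> omega
      · simp only [hgdef, h2]
        split_ifs <;> omega
    refine hw i.val i.isLt ⟨e (f 0), hmem _, fun t => e (f (g t)), ⟨?_, ?_, ?_, ?_, ?_⟩, ?_⟩
    · exact fun t => hmem _
    · intro t; simp [hgdef]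
    · intro s hs' t ht h
      have h := congrArg Fin.val (finj (he h))
      simp only [hgdef] at h
      rw [Nat.mod_eq_of_lt hs', Nat.mod_eq_of_lt ht] at h
      omega
    · exact fun t => (hf' _ _ (hadj t)).1
    · exact fun t => (hf' _ _ (hadj t)).2
    · exact fun t => hf' _ _ (wheel_adj_zero (by simp [hgdef]))

/-! ### Ramsey's theorem for finitely many colors -/

lemma ramsey_seq (k : ℕ) (hk : 0 < k) (T : ℕ) : ∃ N : ℕ, ∀ (V : Type) (χ : V → V → Fin k)
    (S : Finset V), N ≤ S.card → ∃ (f : ℕ → V) (g : ℕ → Fin k),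
      ∀ i < T, f i ∈ S ∧ ∀ j < T, i < j → f i ≠ f j ∧ χ (f i) (f j) = g i := by
  classical
  induction T with
  | zero =>
    refine ⟨1, fun V χ S hS => ?_⟩
    obtain ⟨x, _⟩ := Finset.card_pos.1 hS
    exact ⟨fun _ => x, fun _ => ⟨0, hk⟩, by simp⟩
  | succ T ih =>
    obtain ⟨N, hN⟩ := ih
    refine ⟨k * N + 1, fun V χ S hS => ?_⟩
    obtain ⟨x, hx⟩ := Finset.card_pos.1 (show 0 < S.card by omega)
    obtain ⟨i, _, hi⟩ := Finset.exists_le_card_fiber_of_mul_le_card_of_maps_to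
      (s := S.erase x) (t := (Finset.univ : Finset (Fin k))) (f := fun y => χ x y) (n := N)
      (fun _ _ => Finset.mem_univ _) ⟨⟨0, hk⟩, Finset.mem_univ _⟩
      (by rw [Finset.card_erase_of_mem hx, Finset.card_univ, Fintype.card_fin]; omega)
    obtain ⟨f, g, hfg⟩ := hN V χ _ hi
    refine ⟨fun t => if t = 0 then x else f (t - 1), fun t => if t = 0 then i else g (t - 1), ?_⟩
    intro s hs
    by_cases h0 : s = 0
    · subst h0
      refine ⟨by simpa using hx, fun j hj hj0 => ?_⟩
      have := (hfg (j - 1) (by omega)).1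
      simp only [Finset.mem_filter, Finset.mem_erase] at this
      have hj' : j ≠ 0 := by omega
      simp only [hj', if_true, if_false]
      exact ⟨this.1.1.symm, this.2⟩
    · obtain ⟨h1, h2⟩ := hfg (s - 1) (by omega)
      simp only [Finset.mem_filter, Finset.mem_erase] at h1
      simp only [h0, if_false]
      refine ⟨h1.1.2, fun j hj hsj => ?_⟩
      have hj' : j ≠ 0 := by omega
      simp only [hj', if_false]
      exact h2 (j - 1) (by omega) (by omega)

lemma ramsey (k : ℕ) (hk : 0 < k) (M : ℕ) (H : SimpleGraph (Fin M)) :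
    ∃ N : ℕ, ∀ c : Fin N → Fin N → Fin k, (∀ x y, c x y = c y x) →
      IsMonoCopy (⊤ : SimpleGraph (Fin N)) c H := by
  classical
  obtain ⟨N, hN⟩ := ramsey_seq k hk (k * M)
  refine ⟨N, fun c hc => ?_⟩
  obtain ⟨f, g, hfg⟩ := hN (Fin N) c Finset.univ (by simp)
  obtain ⟨i, _, hi⟩ := Finset.exists_le_card_fiber_of_mul_le_card_of_maps_to
      (s := Finset.range (k * M)) (t := (Finset.univ : Finset (Fin k))) (f := g) (n := M)
      (fun _ _ => Finset.mem_univ _) ⟨⟨0, hk⟩, Finset.mem_univ _⟩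
      (by simp)
  set F := (Finset.range (k * M)).filter (fun x => g x = i)
  obtain ⟨e, he, hmem⟩ : ∃ e : Fin M → ℕ, Function.Injective e ∧ ∀ x, e x ∈ F :=
    ⟨fun x => F.orderEmbOfFin rfl (Fin.castLE hi x),
      fun x y h => by simpa using h, fun x => F.orderEmbOfFin_mem rfl _⟩
  have hm : ∀ x, e x < k * M ∧ g (e x) = i := fun x => by
    simpa [F] using hmem x
  have key : ∀ x y, x ≠ y → f (e x) ≠ f (e y) ∧ c (f (e x)) (f (e y)) = i := by
    intro x y hxy
    rcases lt_or_gt_of_ne (he.ne hxy) with h | h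
    · have := (hfg _ (hm x).1).2 _ (hm y).1 h
      rwa [(hm x).2] at this
    · have := (hfg _ (hm y).1).2 _ (hm x).1 h
      rw [(hm y).2] at this
      exact ⟨this.1.symm, by rw [hc]; exact this.2⟩
  refine ⟨fun x => f (e x), i, ?_, ?_⟩
  · intro x y h
    by_contra hxy
    exact (key x y hxy).1 h
  · intro x y hxy
    have := key x y hxy.ne
    exact ⟨by simpa using this.1, this.2⟩

end WG

/-- Even `k ≥ 2`, even `m ≥ 6`: from a 2-coloring of `K_n` with no monochromatic
wheel `W_m`, one gets a Gallai `k`-coloring of a larger complete graph with no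
monochromatic `W_m`; consequently the Gallai–Ramsey lower bound. -/
theorem wheel_gallai_lower_even_k (k m n c d : ℕ) (hk : 2 ≤ k) (hke : k % 2 = 0)
    (hm : 6 ≤ m) (hme : m % 2 = 0)
    (hcd : (m % 4 = 0 ∧ c = m - 2 ∧ d = m - 4) ∨ (m % 4 = 2 ∧ c = m - 1 ∧ d = m - 2))
    (h2 : ∃ χ : Fin n → Fin n → Fin 2, (∀ x y, χ x y = χ y x) ∧
      ¬ IsMonoCopy (⊤ : SimpleGraph (Fin n)) χ (wheelG m)) :
    (∃ χ : Fin (n + 5 * c * (5 ^ ((k - 2) / 2) - 1) - d * (k - 2)) →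
        Fin (n + 5 * c * (5 ^ ((k - 2) / 2) - 1) - d * (k - 2)) → Fin k,
      (∀ x y, χ x y = χ y x) ∧
      NoRainbowTriangle (⊤ : SimpleGraph (Fin (n + 5 * c * (5 ^ ((k - 2) / 2) - 1) - d * (k - 2)))) χ ∧
      ¬ IsMonoCopy (⊤ : SimpleGraph (Fin (n + 5 * c * (5 ^ ((k - 2) / 2) - 1) - d * (k - 2)))) χ (wheelG m)) ∧
    Ramsey2 (wheelG m) + 5 * c * (5 ^ ((k - 2) / 2) - 1) - d * (k - 2) ≤
      GallaiRamsey k (wheelG m) := by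
  have hj : 2 * ((k - 2) / 2) = k - 2 := by omega
  have hk2 : 2 * ((k - 2) / 2) + 2 = k := by omega
  have hpow : 5 * c * (5 ^ ((k - 2) / 2) - 1) + 5 * c = 5 * c * 5 ^ ((k - 2) / 2) := by
    have : 1 ≤ 5 ^ ((k - 2) / 2) := Nat.one_le_pow _ _ (by norm_num)
    rw [Nat.mul_sub, mul_one]
    exact Nat.sub_add_cancel (Nat.le_mul_of_pos_right _ this)
  have main : ∀ n', (∃ χ : Fin n' → Fin n' → Fin 2, (∀ x y, χ x y = χ y x) ∧
      ¬ IsMonoCopy (⊤ : SimpleGraph (Fin n')) χ (wheelG m)) →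
      ∃ M, M + d * (k - 2) = n' + 5 * c * (5 ^ ((k - 2) / 2) - 1) ∧ ∀ N ≤ M,
      ∃ ψ : Fin N → Fin N → Fin k, (∀ x y, ψ x y = ψ y x) ∧
      NoRainbowTriangle (⊤ : SimpleGraph (Fin N)) ψ ∧
      ¬ IsMonoCopy (⊤ : SimpleGraph (Fin N)) ψ (wheelG m) := by
    intro n' h
    obtain ⟨S, χ, h1, h2, h3, h4, h5⟩ :=
      WG.exG hm hme hcd (WG.base_of_fin hm h) ((k - 2) / 2)
    rw [hk2] at h4 h5
    rw [hj] at h3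
    exact ⟨S.card, by omega, fun N hN => WG.fin_of_set hm (by omega) h1 h2 hN h4 h5⟩
  constructor
  · obtain ⟨M, hM, hψ⟩ := main n h2
    exact hψ _ (by omega)
  · obtain ⟨N0, hN0⟩ := WG.ramsey k (by omega) _ (wheelG m)
    obtain ⟨N2, hN2⟩ := WG.ramsey 2 (by omega) _ (wheelG m)
    have hmem : GallaiRamsey k (wheelG m) ∈ {N | ∀ c : Fin N → Fin N → Fin k,
        (∀ x y, c x y = c y x) → NoRainbowTriangle (⊤ : SimpleGraph (Fin N)) c →
        IsMonoCopy (⊤ : SimpleGraph (Fin N)) c (wheelG m)} :=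
      Nat.sInf_mem ⟨N0, fun c hc _ => hN0 c hc⟩
    have hmem2 : Ramsey2 (wheelG m) ∈ {N | ∀ c : Fin N → Fin N → Fin 2,
        (∀ x y, c x y = c y x) → IsMonoCopy (⊤ : SimpleGraph (Fin N)) c (wheelG m)} :=
      Nat.sInf_mem ⟨N2, hN2⟩
    have hpos : 0 < Ramsey2 (wheelG m) := by
      rcases Nat.eq_zero_or_pos (Ramsey2 (wheelG m)) with h | h
      · rw [h] at hmem2
        obtain ⟨f, _⟩ := hmem2 (fun _ _ => 0) (fun _ _ => rfl)
        exact (f 0).elim0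
      · exact h
    have hnot : Ramsey2 (wheelG m) - 1 ∉ {N | ∀ c : Fin N → Fin N → Fin 2,
        (∀ x y, c x y = c y x) → IsMonoCopy (⊤ : SimpleGraph (Fin N)) c (wheelG m)} :=
      Nat.notMem_of_lt_sInf (Nat.sub_lt hpos Nat.one_pos)
    simp only [Set.mem_setOf_eq, not_forall] at hnot
    obtain ⟨χ, hχ, hχ'⟩ := hnot
    obtain ⟨M, hM, hψ⟩ := main _ ⟨χ, hχ, hχ'⟩
    by_contra hcon
    obtain ⟨ψ, w1, w2, w3⟩ := hψ (GallaiRamsey k (wheelG m)) (by omega)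
    exact w3 (hmem ψ w1 w2)
end

section
/- Let k ≥ 5 be odd and let m ≥ 6 be even. Set c = m−2 and d = m−4 if m ≡ 0 (mod 4), and c = m−1 and d = m−2 if m ≡ 2 (mod 4). Suppose there exists an edge 2-coloring of the complete graph on n vertices with no monochromatic copy of the wheel W_m. Then there exists a Gallai k-coloring of the complete graph on 2n + 10c(5^((k−3)/2) − 1) − 2d(k−3) vertices with no monochromatic copy of W_m. Consequently GR_k(W_m) ≥ 2(R_2(W_m) + 5c(5^((k−3)/2) − 1) − d(k−3)) − 1. -/
open SimpleGraph

namespace GW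

def RR {V : Type} (χ : V → V → ℕ) (i : ℕ) (x y : V) : Prop := x ≠ y ∧ χ x y = i

def NoWheel (m : ℕ) {V : Type} (χ : V → V → ℕ) (i : ℕ) : Prop :=
  ∀ (v : V) (x : ℕ → V), (∀ j, j < m → RR χ i v (x j)) →
    (∀ j j', j < m → j' < m → x j = x j' → j = j') →
    (∀ j, j + 1 < m → RR χ i (x j) (x (j + 1))) → RR χ i (x (m - 1)) (x 0) → False

/-- Color `i` has small components and small degrees. -/
def Weak (m : ℕ) {V : Type} (χ : V → V → ℕ) (i : ℕ) : Prop :=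
  ∃ (L : Type) (l : V → L), (∀ x y, RR χ i x y → l x = l y) ∧
    (∀ S : Finset V, (∀ x ∈ S, ∀ y ∈ S, l x = l y) → S.card < m) ∧
    (∀ (v : V) (S : Finset V), (∀ x ∈ S, RR χ i v x) → S.card < m / 2)

def NoRb {V : Type} (χ : V → V → ℕ) : Prop :=
  ∀ x y z : V, x ≠ y → y ≠ z → x ≠ z →
    χ x y = χ y z ∨ χ y z = χ x z ∨ χ x y = χ x z

def Str (m N : ℕ) (C W : ℕ → Prop) : Prop :=
  ∃ (V : Type) (_ : Fintype V) (χ : V → V → ℕ), Fintype.card V = N ∧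
    (∀ x y, χ x y = χ y x) ∧ NoRb χ ∧ (∀ x y, x ≠ y → C (χ x y)) ∧
    (∀ i, W i → Weak m χ i) ∧ ∀ i, NoWheel m χ i

section Sub
set_option linter.unusedSectionVars false
variable {I : Type} [DecidableEq I] {V : I → Type}

def sub (r : I → I → ℕ) (χ : ∀ i, V i → V i → ℕ) (p q : Sigma V) : ℕ :=
  if h : p.1 = q.1 then χ q.1 (h ▸ p.2) q.2 else r p.1 q.1

theorem sub_same (r : I → I → ℕ) (χ : ∀ i, V i → V i → ℕ) (i : I) (x y : V i) :
    sub r χ ⟨i, x⟩ ⟨i, y⟩ = χ i x y := by simp [sub]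

theorem sub_diff (r : I → I → ℕ) (χ : ∀ i, V i → V i → ℕ) (i j : I) (h : i ≠ j)
    (x : V i) (y : V j) : sub r χ ⟨i, x⟩ ⟨j, y⟩ = r i j := by simp [sub, h]

theorem RR_same (r : I → I → ℕ) (χ : ∀ i, V i → V i → ℕ) (c : ℕ) (i : I) (x y : V i) :
    RR (sub r χ) c ⟨i, x⟩ ⟨i, y⟩ ↔ RR (χ i) c x y := by simp [RR, sub_same]

theorem RR_diff (r : I → I → ℕ) (χ : ∀ i, V i → V i → ℕ) (c : ℕ) (i j : I) (h : i ≠ j)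
    (x : V i) (y : V j) : RR (sub r χ) c ⟨i, x⟩ ⟨j, y⟩ ↔ r i j = c := by
  simp [RR, sub_diff r χ i j h, h]

theorem sub_symm (r : I → I → ℕ) (χ : ∀ i, V i → V i → ℕ) (hr : ∀ i j, r i j = r j i)
    (hχ : ∀ i x y, χ i x y = χ i y x) (p q : Sigma V) : sub r χ p q = sub r χ q p := by
  obtain ⟨i, x⟩ := p
  obtain ⟨j, y⟩ := q
  by_cases h : i = j
  · subst h
    simp only [sub_same, hχ i x y]
  · rw [sub_diff _ _ _ _ h, sub_diff _ _ _ _ (Ne.symm h), hr]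

theorem sub_noRb (r : I → I → ℕ) (χ : ∀ i, V i → V i → ℕ) (hr : ∀ i j, r i j = r j i)
    (hr' : NoRb r) (hχ : ∀ i, NoRb (χ i)) : NoRb (sub r χ) := by
  rintro ⟨i, x⟩ ⟨j, y⟩ ⟨k, z⟩ h1 h2 h3
  by_cases h : i = j
  · subst h
    by_cases h' : i = k
    · subst h'
      simp only [sub_same]
      exact hχ i x y z (by simpa using h1) (by simpa using h2) (by simpa using h3)
    · rw [sub_diff _ _ _ _ h', sub_diff _ _ _ _ h']
      exact Or.inr (Or.inl rfl)
  · by_cases h' : j = k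
    · subst h'
      rw [sub_diff _ _ _ _ h, sub_diff _ _ _ _ h]
      exact Or.inr (Or.inr rfl)
    · by_cases h'' : i = k
      · subst h''
        rw [sub_diff _ _ _ _ h, sub_diff _ _ _ _ h', hr i j]
        exact Or.inl rfl
      · rw [sub_diff _ _ _ _ h, sub_diff _ _ _ _ h', sub_diff _ _ _ _ h'']
        exact hr' i j k h h' h''

theorem pull (S : Finset (Sigma V)) (a : I) (h : ∀ p ∈ S, p.1 = a) :
    ∃ T : Finset (V a), T.card = S.card ∧ ∀ x ∈ T, (⟨a, x⟩ : Sigma V) ∈ S := by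
  classical
  refine ⟨S.preimage (Sigma.mk a) (sigma_mk_injective.injOn), ?_, ?_⟩
  · rw [Finset.card_preimage]
    congr 1
    apply Finset.filter_true_of_mem
    rintro ⟨b, x⟩ hp
    have := h _ hp
    simp only at this
    subst this
    exact ⟨x, rfl⟩
  · intro x hx
    exact Finset.mem_preimage.1 hx

theorem class_small (m : ℕ) (hm : 1 ≤ m) (L : I → Type) (l : ∀ i, V i → L i)
    (h : ∀ i, ∀ S : Finset (V i), (∀ x ∈ S, ∀ y ∈ S, l i x = l i y) → S.card < m)
    (S : Finset (Sigma V))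
    (hS : ∀ p ∈ S, ∀ q ∈ S, (⟨p.1, l p.1 p.2⟩ : Sigma L) = ⟨q.1, l q.1 q.2⟩) : S.card < m := by
  rcases S.eq_empty_or_nonempty with rfl | ⟨p, hp⟩
  · rw [Finset.card_empty]; omega
  · obtain ⟨T, hT, hT'⟩ := pull S p.1 (fun q hq => by
      have := hS q hq p hp
      exact (Sigma.mk.inj_iff.1 this).1)
    rw [← hT]
    refine h _ T fun x hx y hy => ?_
    have := hS _ (hT' x hx) _ (hT' y hy)
    simpa using this

theorem deg_small (m : ℕ) (r : I → I → ℕ) (χ : ∀ i, V i → V i → ℕ) (c : ℕ) (a : I) (v : V a)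
    (h : ∀ (S : Finset (V a)), (∀ x ∈ S, RR (χ a) c v x) → S.card < m / 2)
    (S : Finset (Sigma V)) (hS : ∀ p ∈ S, RR (sub r χ) c ⟨a, v⟩ p) (hS' : ∀ p ∈ S, p.1 = a) :
    S.card < m / 2 := by
  obtain ⟨T, hT, hT'⟩ := pull S a hS'
  rw [← hT]
  exact h T fun x hx => (RR_same r χ c a v x).1 (hS _ (hT' x hx))

theorem weak_sub (m : ℕ) (hm : 1 ≤ m) (r : I → I → ℕ) (χ : ∀ i, V i → V i → ℕ) (c : ℕ)
    (hr : ∀ i j, i ≠ j → r i j ≠ c) (h : ∀ i, Weak m (χ i) c) : Weak m (sub r χ) c := by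
  choose L l h1 h2 h3 using h
  refine ⟨Sigma L, fun p => ⟨p.1, l p.1 p.2⟩, ?_, class_small m hm L l h2, ?_⟩
  · rintro ⟨i, x⟩ ⟨j, y⟩ hxy
    by_cases hij : i = j
    · subst hij
      rw [RR_same] at hxy
      simp [h1 i x y hxy]
    · rw [RR_diff _ _ _ _ _ hij] at hxy
      exact absurd hxy (hr i j hij)
  · rintro ⟨a, v⟩ S hS
    refine deg_small m r χ c a v (h3 a v) S hS ?_
    rintro ⟨b, y⟩ hp
    by_contra hne
    have := hS _ hp
    rw [RR_diff _ _ _ _ _ (Ne.symm hne)] at this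
    exact hr _ _ (Ne.symm hne) this

theorem noWheel_sub (m : ℕ) (hm : 2 ≤ m) (r : I → I → ℕ) (χ : ∀ i, V i → V i → ℕ) (c : ℕ)
    (hr : ∀ i j, i ≠ j → r i j ≠ c) (h : ∀ i, NoWheel m (χ i) c) : NoWheel m (sub r χ) c := by
  rintro ⟨a, v⟩ x hc hinj hp hl
  have key : ∀ j, ∃ y : V a, j < m → x j = ⟨a, y⟩ := by
    intro j
    by_cases hj : j < m
    · have := hc j hj
      rcases hx : x j with ⟨b, y⟩
      rw [hx] at this
      by_cases hab : a = b
      · subst hab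
        exact ⟨y, fun _ => rfl⟩
      · rw [RR_diff _ _ _ _ _ hab] at this
        exact absurd this (hr _ _ hab)
    · exact ⟨v, fun h => absurd h hj⟩
  choose y hy using key
  refine h a v y ?_ ?_ ?_ ?_
  · intro j hj
    have := hc j hj
    rwa [hy j hj, RR_same] at this
  · intro j j' hj hj' he
    exact hinj j j' hj hj' (by rw [hy j hj, hy j' hj', he])
  · intro j hj
    have := hp j hj
    rwa [hy j (by omega), hy (j+1) hj, RR_same] at this
  · rwa [hy (m-1) (by omega), hy 0 (by omega), RR_same] at hl

theorem noWheel_cross (m : ℕ) (hm : 2 ≤ m) (r : I → I → ℕ) (χ : ∀ i, V i → V i → ℕ) (c : ℕ)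
    (A : I → Prop) (htri : ∀ i j k, i ≠ j → j ≠ k → i ≠ k → ¬ (r i j = c ∧ r j k = c ∧ r i k = c))
    (hA : ∀ i, ¬ A i → ∀ x y : V i, ¬ RR (χ i) c x y)
    (hAA : ∀ i j, i ≠ j → r i j = c → ¬ A i ∨ ¬ A j)
    (h : ∀ i, Weak m (χ i) c) : NoWheel m (sub r χ) c := by
  classical
  choose L l h1 h2 h3 using h
  rintro ⟨a, v⟩ x hc hinj hp -
  by_cases ha : A a
  · have key : ∀ j, ∃ e, j < m / 2 → (e = 2 * j ∨ e = 2 * j + 1) ∧ (x e).1 = a := by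
      intro j
      by_cases hj : j < m / 2
      swap
      · exact ⟨0, fun h => absurd h hj⟩
      by_cases e0 : (x (2 * j)).1 = a
      · exact ⟨_, fun _ => ⟨Or.inl rfl, e0⟩⟩
      by_cases e1 : (x (2 * j + 1)).1 = a
      · exact ⟨_, fun _ => ⟨Or.inr rfl, e1⟩⟩
      exfalso
      have c0 := hc (2 * j) (by omega)
      have c1 := hc (2 * j + 1) (by omega)
      have c2 := hp (2 * j) (by omega)
      generalize x (2 * j) = p at e0 c0 c2
      generalize x (2 * j + 1) = q at e1 c1 c2
      obtain ⟨b, y⟩ := p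
      obtain ⟨b', y'⟩ := q
      simp only at e0 e1
      rw [RR_diff _ _ _ _ _ (Ne.symm e0)] at c0
      rw [RR_diff _ _ _ _ _ (Ne.symm e1)] at c1
      by_cases hb : b = b'
      · subst hb
        rw [RR_same] at c2
        rcases hAA a b (Ne.symm e0) c0 with h' | h'
        · exact h' ha
        · exact hA b h' _ _ c2
      · rw [RR_diff _ _ _ _ _ hb] at c2
        exact htri a b b' (Ne.symm e0) hb (Ne.symm e1) ⟨c0, c2, c1⟩
    choose g hg using key
    have := deg_small m r χ c a v (h3 a v) ((Finset.range (m / 2)).image (fun j => x (g j)))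
      (by
        intro p hp
        obtain ⟨j, hj, rfl⟩ := Finset.mem_image.1 hp
        rw [Finset.mem_range] at hj
        apply hc
        have := (hg j hj).1
        omega)
      (by
        intro p hp
        obtain ⟨j, hj, rfl⟩ := Finset.mem_image.1 hp
        rw [Finset.mem_range] at hj
        exact (hg j hj).2)
    rw [Finset.card_image_of_injOn, Finset.card_range] at this
    · omega
    · intro j hj j' hj' he
      simp only [Finset.coe_range, Set.mem_Iio] at hj hj'
      have a1 := (hg j hj).1
      have a2 := (hg j' hj').1
      have := hinj (g j) (g j') (by omega) (by omega) he
      omega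
  · have hout : ∀ j, j < m → (x j).1 ≠ a ∧ r a (x j).1 = c := by
      intro j hj
      have c0 := hc j hj
      generalize x j = p at c0 ⊢
      obtain ⟨b, y⟩ := p
      by_cases hb : a = b
      · subst hb
        rw [RR_same] at c0
        exact absurd c0 (hA a ha _ _)
      · rw [RR_diff _ _ _ _ _ hb] at c0
        exact ⟨Ne.symm hb, c0⟩
    have hlab : ∀ j, j + 1 < m → (⟨(x j).1, l _ (x j).2⟩ : Sigma L) =
        ⟨(x (j+1)).1, l _ (x (j+1)).2⟩ := by
      intro j hj
      have c0 := hout j (by omega)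
      have c1 := hout (j+1) hj
      have c2 := hp j hj
      generalize x j = p at c0 c2 ⊢
      generalize x (j + 1) = q at c1 c2 ⊢
      obtain ⟨b, y⟩ := p
      obtain ⟨b', y'⟩ := q
      by_cases hb : b = b'
      · subst hb
        rw [RR_same] at c2
        simp [h1 _ _ _ c2]
      · rw [RR_diff _ _ _ _ _ hb] at c2
        exact absurd ⟨c0.2, c2, c1.2⟩ (htri a b b' (Ne.symm c0.1) hb (Ne.symm c1.1))
    have hall : ∀ j, j < m → (⟨(x j).1, l _ (x j).2⟩ : Sigma L) = ⟨(x 0).1, l _ (x 0).2⟩ := by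
      intro j
      induction j with
      | zero => intro _; rfl
      | succ j ih => intro hj; rw [← hlab j hj]; exact ih (by omega)
    have := class_small m (by omega) L l h2 ((Finset.range m).image x) (by
      intro p hp q hq
      obtain ⟨j, hj, rfl⟩ := Finset.mem_image.1 hp
      obtain ⟨j', hj', rfl⟩ := Finset.mem_image.1 hq
      rw [Finset.mem_range] at hj hj'
      rw [hall j hj, hall j' hj'])
    rw [Finset.card_image_of_injOn, Finset.card_range] at this
    · omega
    · intro j hj j' hj' he
      simp only [Finset.coe_range, Set.mem_Iio] at hj hj'
      exact hinj _ _ hj hj' he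

end Sub

theorem weak_of_absent (m : ℕ) (hm : 2 ≤ m) {V : Type} (χ : V → V → ℕ) (c : ℕ)
    (h : ∀ x y, ¬ RR χ c x y) : Weak m χ c := by
  refine ⟨V, id, fun x y hxy => absurd hxy (h x y), ?_, ?_⟩
  · intro S hS
    have : S.card ≤ 1 := Finset.card_le_one.2 hS
    omega
  · intro v S hS
    rcases S.eq_empty_or_nonempty with rfl | ⟨p, hp⟩
    · simp; omega
    · exact absurd (hS p hp) (h _ _)

theorem noWheel_of_weak (m : ℕ) (hm : 2 ≤ m) {V : Type} (χ : V → V → ℕ) (c : ℕ)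
    (h : Weak m χ c) : NoWheel m χ c := by
  classical
  obtain ⟨L, l, h1, h2, h3⟩ := h
  intro v x hc hinj _ _
  have := h3 v ((Finset.range m).image x) (by
      intro p hp
      obtain ⟨j, hj, rfl⟩ := Finset.mem_image.1 hp
      exact hc j (Finset.mem_range.1 hj))
  rw [Finset.card_image_of_injOn, Finset.card_range] at this
  · omega
  · intro j hj j' hj' he
    simp only [Finset.coe_range, Set.mem_Iio] at hj hj'
    exact hinj _ _ hj hj' he

theorem comb {I : Type} [Fintype I] [DecidableEq I] (m : ℕ) (hm : 2 ≤ m) (r : I → I → ℕ)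
    (hr : ∀ i j, r i j = r j i) (hrb : NoRb r) (N : I → ℕ) (C W : I → ℕ → Prop)
    (hS : ∀ j, Str m (N j) (C j) (W j)) (C' W' : ℕ → Prop)
    (hC : ∀ j i, C j i → C' i) (hrC : ∀ i j, i ≠ j → C' (r i j))
    (hW : ∀ i, W' i → (∀ a b, a ≠ b → r a b ≠ i) ∧ ∀ j, W j i ∨ ¬ C j i)
    (hX : ∀ i, (∀ a b, a ≠ b → r a b ≠ i) ∨
      ((∀ a b d, a ≠ b → b ≠ d → a ≠ d → ¬ (r a b = i ∧ r b d = i ∧ r a d = i)) ∧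
      (∀ j, W j i ∨ ¬ C j i) ∧ (∀ a b, a ≠ b → r a b = i → ¬ C a i ∨ ¬ C b i))) :
    Str m (∑ j, N j) C' W' := by
  choose V fV χ hcard hsym hnr hcol hweak hnw using hS
  have habs : ∀ j i, ¬ C j i → ∀ x y, ¬ RR (χ j) i x y := by
    rintro j i hji x y ⟨hne, rfl⟩
    exact hji (hcol j x y hne)
  have hwk : ∀ i, (∀ j, W j i ∨ ¬ C j i) → ∀ j, Weak m (χ j) i := by
    intro i hi j
    rcases hi j with h | h
    · exact hweak j i h
    · exact weak_of_absent m hm _ _ (habs j i h)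
  refine ⟨Sigma V, inferInstance, sub r χ, ?_, sub_symm r χ hr hsym, sub_noRb r χ hr hrb hnr,
    ?_, ?_, ?_⟩
  · rw [Fintype.card_sigma]
    exact Finset.sum_congr rfl fun j _ => hcard j
  · rintro ⟨i, x⟩ ⟨j, y⟩ hne
    by_cases h : i = j
    · subst h
      rw [sub_same]
      exact hC i _ (hcol i x y (by simpa using hne))
    · rw [sub_diff _ _ _ _ h]
      exact hrC i j h
  · intro i hi
    exact weak_sub m (by omega) r χ i (hW i hi).1 (hwk i (hW i hi).2)
  · intro i
    rcases hX i with h | ⟨h1, h2, h3⟩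
    · exact noWheel_sub m hm r χ i h fun j => hnw j i
    · exact noWheel_cross m hm r χ i (fun j => C j i) h1 (fun j => habs j i) h3 (hwk i h2)


def pentR (i j : Fin 5) : Bool := j - i = 1 ∨ j - i = 4

theorem pent_step (m : ℕ) (hm : 2 ≤ m) (a b : ℕ) (hab : a ≠ b) (N0 N1 N2 : ℕ)
    (C0 C1 C2 W0 W1 W2 C' W' : ℕ → Prop)
    (h0 : Str m N0 C0 W0) (h1 : Str m N1 C1 W1) (h2 : Str m N2 C2 W2)
    (hC0 : ∀ i, C0 i → C' i) (hC1 : ∀ i, C1 i → C' i) (hC2 : ∀ i, C2 i → C' i)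
    (ha : C' a) (hb : C' b)
    (hW : ∀ i, W' i → i ≠ a ∧ i ≠ b ∧ (W0 i ∨ ¬ C0 i) ∧ (W1 i ∨ ¬ C1 i) ∧ (W2 i ∨ ¬ C2 i))
    (ha0 : ¬ C0 a) (ha1 : W1 a ∨ ¬ C1 a) (ha2 : ¬ C2 a)
    (hb0 : ¬ C0 b) (hb1 : ¬ C1 b) (hb2 : W2 b ∨ ¬ C2 b) :
    Str m (N0 + 2 * N1 + 2 * N2) C' W' := by
  have hN : N0 + 2 * N1 + 2 * N2 = ∑ j, (![N0, N1, N2, N2, N1] : Fin 5 → ℕ) j := by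
    simp [Fin.sum_univ_succ]; ring
  have key : ∀ (P : (Fin 5) → Prop), P 0 → P 1 → P 2 → P 3 → P 4 → ∀ j, P j := by
    intro P p0 p1 p2 p3 p4 j
    fin_cases j <;> assumption
  have s1 : ∀ i j, pentR i j = pentR j i := by decide
  have s2 : ∀ i j k : Fin 5, i ≠ j → j ≠ k → i ≠ k →
    ¬ (pentR i j = true ∧ pentR j k = true ∧ pentR i k = true) := by decide
  have s3 : ∀ i j k : Fin 5, i ≠ j → j ≠ k → i ≠ k →
    ¬ (pentR i j = false ∧ pentR j k = false ∧ pentR i k = false) := by decide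
  have s4 : ∀ i j : Fin 5, i ≠ j → pentR i j = true →
    (i = 0 ∨ i = 2 ∨ i = 3) ∨ (j = 0 ∨ j = 2 ∨ j = 3) := by decide
  have s5 : ∀ i j : Fin 5, i ≠ j → pentR i j = false →
    (i = 0 ∨ i = 1 ∨ i = 4) ∨ (j = 0 ∨ j = 1 ∨ j = 4) := by decide
  have rA : ∀ i j, (if pentR i j then a else b) = a ↔ pentR i j = true := by
    intro i j; split_ifs with h <;> simp [h, hab.symm]
  have rB : ∀ i j, (if pentR i j then a else b) = b ↔ pentR i j = false := by
    intro i j; split_ifs with h <;> simp [h, hab]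
  rw [hN]
  refine comb m hm (fun i j => if pentR i j then a else b) (fun i j => by simp only [s1 i j])
    ?_ _ ![C0, C1, C2, C2, C1] ![W0, W1, W2, W2, W1] ?_ C' W' ?_ ?_ ?_ ?_
  · intro x y z _ _ _
    cases e1 : pentR x y <;> cases e2 : pentR y z <;> cases e3 : pentR x z <;> simp [e1, e2, e3]
  · exact key _ h0 h1 h2 h2 h1
  · exact key _ hC0 hC1 hC2 hC2 hC1
  · intro i j _
    try simp only
    split_ifs <;> assumption
  · intro i hi
    obtain ⟨q1, q2, q3, q4, q5⟩ := hW i hi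
    refine ⟨?_, key _ q3 q4 q5 q5 q4⟩
    intro x y _
    try simp only
    split_ifs
    · exact q1.symm
    · exact q2.symm
  · intro i
    by_cases hia : i = a
    · subst hia
      right
      refine ⟨?_, key _ (Or.inr ha0) ha1 (Or.inr ha2) (Or.inr ha2) ha1, ?_⟩
      · intro x y z e1 e2 e3
        simp only [rA]
        exact s2 x y z e1 e2 e3
      · intro x y e
        simp only [rA]
        intro h
        rcases s4 x y e h with (rfl | rfl | rfl) | (rfl | rfl | rfl)
        exacts [Or.inl ha0, Or.inl ha2, Or.inl ha2, Or.inr ha0, Or.inr ha2, Or.inr ha2]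
    by_cases hib : i = b
    · subst hib
      right
      refine ⟨?_, key _ (Or.inr hb0) (Or.inr hb1) hb2 hb2 (Or.inr hb1), ?_⟩
      · intro x y z e1 e2 e3
        simp only [rB]
        exact s3 x y z e1 e2 e3
      · intro x y e
        simp only [rB]
        intro h
        rcases s5 x y e h with (rfl | rfl | rfl) | (rfl | rfl | rfl)
        exacts [Or.inl hb0, Or.inl hb1, Or.inl hb1, Or.inr hb0, Or.inr hb1, Or.inr hb1]
    · left
      intro x y _
      try simp only
      split_ifs
      · exact Ne.symm hia
      · exact Ne.symm hib

/-- A vertex set of size `< m` all of whose colors have small degree. -/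
theorem leaf_str (m c : ℕ) (hm : 2 ≤ m) (hc : c < m) (χ : Fin c → Fin c → ℕ) (C : ℕ → Prop)
    (hsym : ∀ x y, χ x y = χ y x) (hrb : NoRb χ) (hC : ∀ x y, x ≠ y → C (χ x y))
    (hdeg : ∀ i (v : Fin c) (S : Finset (Fin c)), (∀ x ∈ S, RR χ i v x) → S.card < m / 2) :
    Str m c C (fun _ => True) := by
  have hw : ∀ i, Weak m χ i := by
    intro i
    refine ⟨Unit, fun _ => (), fun _ _ _ => rfl, ?_, hdeg i⟩
    intro S _
    have := S.card_le_univ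
    rw [Fintype.card_fin] at this
    omega
  exact ⟨Fin c, inferInstance, χ, Fintype.card_fin c, hsym, hrb, hC, fun i _ => hw i,
    fun i => noWheel_of_weak m hm χ i (hw i)⟩

theorem leaf_one (m p : ℕ) (hm : 2 ≤ m) : Str m (m / 2) (fun i => i = p) (fun _ => True) := by
  refine leaf_str m (m / 2) hm (by omega) (fun _ _ => p) _ (fun _ _ => rfl) ?_ (fun _ _ _ => rfl) ?_
  · intro _ _ _ _ _ _
    exact Or.inl rfl
  · intro i v S hS
    have : S ⊆ Finset.univ.erase v := by
      intro x hx
      simp [(hS x hx).1.symm]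
    have := Finset.card_le_card this
    rw [Finset.card_erase_of_mem (Finset.mem_univ _), Finset.card_univ, Fintype.card_fin] at this
    have := v.2
    omega

def dl (c x y : ℕ) : ℕ := if x ≤ y then y - x else y + c - x

theorem leaf_two (m c w p q : ℕ) (hm : 2 ≤ m) (hc : c < m) (hw : 2 * w < m / 2)
    (hw' : c - 1 - 2 * w < m / 2) (hwc : 2 * w < c) (hpq : p ≠ q) :
    Str m c (fun i => i = p ∨ i = q) (fun _ => True) := by
  refine leaf_str m c hm hc
    (fun x y => if dl c x y ≤ w ∨ c - w ≤ dl c x y then p else q) _ ?_ ?_ ?_ ?_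
  · intro x y
    rcases eq_or_ne x y with rfl | hne
    · rfl
    have h1 : x.val ≠ y.val := fun h => hne (Fin.ext h)
    have := x.2
    have := y.2
    have : dl c x y = c - dl c y x := by unfold dl; split_ifs <;> omega
    have h2 : dl c y x ≤ c := by unfold dl; split_ifs <;> omega
    have : (dl c x y ≤ w ∨ c - w ≤ dl c x y) ↔ (dl c y x ≤ w ∨ c - w ≤ dl c y x) := by omega
    simp only [this]
  · intro x y z _ _ _
    try simp only
    split_ifs <;> simp
  · intro x y _
    try simp only
    split_ifs <;> simp
  · intro i v S hS
    have hinj : Set.InjOn (fun x : Fin c => dl c v x) S := by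
      intro x _ y _ h
      have := x.2
      have := y.2
      have := v.2
      apply Fin.ext
      simp only [dl] at h
      split_ifs at h <;> omega
    have hlt : ∀ x ∈ S, 1 ≤ dl c v x ∧ dl c v x < c := by
      intro x hx
      have h1 : v.val ≠ x.val := fun h => (hS x hx).1 (Fin.ext h)
      have := x.2
      have := v.2
      unfold dl
      split_ifs <;> omega
    rw [← Finset.card_image_of_injOn hinj]
    by_cases hip : i = p
    · subst hip
      have : S.image (fun x : Fin c => dl c v x) ⊆ Finset.Icc 1 w ∪ Finset.Ico (c - w) c := by
        intro t ht
        obtain ⟨x, hx, rfl⟩ := Finset.mem_image.1 ht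
        have h1 := hlt x hx
        have h2 := (hS x hx).2
        simp only at h2
        split_ifs at h2 with h3
        · simp only [Finset.mem_union, Finset.mem_Icc, Finset.mem_Ico]
          omega
        · exact absurd h2.symm hpq
      have := (Finset.card_le_card this).trans (Finset.card_union_le _ _)
      simp only [Nat.card_Icc, Nat.card_Ico] at this
      omega
    · have : S.image (fun x : Fin c => dl c v x) ⊆ Finset.Ico (w + 1) (c - w) := by
        intro t ht
        obtain ⟨x, hx, rfl⟩ := Finset.mem_image.1 ht
        have h2 := (hS x hx).2
        simp only at h2
        split_ifs at h2 with h3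
        · exact absurd h2.symm hip
        · simp only [Finset.mem_Ico]
          omega
      have := Finset.card_le_card this
      simp only [Nat.card_Ico] at this
      omega

theorem Str.mono {m N : ℕ} {C W C' W' : ℕ → Prop} (h : Str m N C W) (hC : ∀ i, C i → C' i)
    (hW : ∀ i, W' i → W i) : Str m N C' W' := by
  obtain ⟨V, f, χ, h1, h2, h3, h4, h5, h6⟩ := h
  exact ⟨V, f, χ, h1, h2, h3, fun x y e => hC _ (h4 x y e), fun i hi => h5 i (hW i hi), h6⟩

theorem strD (m c w : ℕ) (hm : 2 ≤ m) (hc : c < m) (hw : 2 * w < m / 2)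
    (hw' : c - 1 - 2 * w < m / 2) (hwc : 2 * w < c) (s : ℕ) :
    ∀ p q, p ≠ q → 2 * s ≤ p → 2 * s ≤ q →
    Str m (c * 5 ^ s) (fun i => i < 2 * s ∨ i = p ∨ i = q) (fun i => i = p ∨ i = q) := by
  induction s with
  | zero =>
    intro p q hpq _ _
    have := leaf_two m c w p q hm hc hw hw' hwc hpq
    rw [pow_zero, mul_one]
    exact this.mono (fun i hi => Or.inr hi) (fun _ _ => trivial)
  | succ s ih =>
    intro p q hpq hp hq
    have h := ih p q hpq (by omega) (by omega)
    have := pent_step m hm (2 * s) (2 * s + 1) (by omega) _ _ _ _ _ _ _ _ _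
      (fun i => i < 2 * (s + 1) ∨ i = p ∨ i = q) (fun i => i = p ∨ i = q) h h h
      (by intro i; omega) (by intro i; omega) (by intro i; omega) (by omega) (by omega)
      (by intro i; omega) (by omega) (by omega) (by omega) (by omega) (by omega) (by omega)
    convert this using 1
    ring

theorem strH (m c w : ℕ) (hm : 2 ≤ m) (hc : c < m) (hw : 2 * w < m / 2)
    (hw' : c - 1 - 2 * w < m / 2) (hwc : 2 * w < c) (s : ℕ) :
    ∀ p, 2 * s ≤ p → ∃ N, N + c = m / 2 + c * 5 ^ s ∧
    Str m N (fun i => i < 2 * s ∨ i = p) (fun i => i = p) := by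
  induction s with
  | zero =>
    intro p _
    refine ⟨m / 2, by ring, ?_⟩
    exact (leaf_one m p hm).mono (fun i hi => Or.inr hi) (fun _ _ => trivial)
  | succ s ih =>
    intro p hp
    obtain ⟨N, hN, h⟩ := ih p (by omega)
    have h1 := strD m c w hm hc hw hw' hwc s p (2 * s) (by omega) (by omega) (by omega)
    have h2 := strD m c w hm hc hw hw' hwc s p (2 * s + 1) (by omega) (by omega) (by omega)
    refine ⟨N + 2 * (c * 5 ^ s) + 2 * (c * 5 ^ s), by rw [pow_succ]; linarith, ?_⟩
    exact pent_step m hm (2 * s) (2 * s + 1) (by omega) _ _ _ _ _ _ _ _ _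
      (fun i => i < 2 * (s + 1) ∨ i = p) (fun i => i = p) h h1 h2
      (by intro i; omega) (by intro i; omega) (by intro i; omega) (by omega) (by omega)
      (by intro i; omega) (by omega) (by omega) (by omega) (by omega) (by omega) (by omega)

theorem strG (m c w d n : ℕ) (hm : 2 ≤ m) (hc : c < m) (hw : 2 * w < m / 2)
    (hw' : c - 1 - 2 * w < m / 2) (hwc : 2 * w < c) (hme : m % 2 = 0) (hd : m + d = 2 * c)
    (h0 : Str m n (fun i => i < 2) (fun _ => False)) (t : ℕ) :
    ∃ N, N + 2 * d * t + 5 * c = n + 5 * c * 5 ^ t ∧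
    Str m N (fun i => i < 2 * t + 2) (fun _ => False) := by
  induction t with
  | zero => exact ⟨n, by ring, h0⟩
  | succ t ih =>
    obtain ⟨N, hN, h⟩ := ih
    obtain ⟨M, hM, h1⟩ := strH m c w hm hc hw hw' hwc (t + 1) (2 * t + 2) (by omega)
    obtain ⟨M', hM', h2⟩ := strH m c w hm hc hw hw' hwc (t + 1) (2 * t + 3) (by omega)
    refine ⟨N + 2 * M + 2 * M', ?_, ?_⟩
    · have e : m / 2 * 2 = m := by omega
      rw [pow_succ] at *
      nlinarith
    · exact pent_step m hm (2 * t + 2) (2 * t + 3) (by omega) _ _ _ _ _ _ _ _ _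
        (fun i => i < 2 * (t + 1) + 2) (fun _ => False) h h1 h2
        (by intro i; omega) (by intro i; omega) (by intro i; omega) (by omega) (by omega)
        (by intro i hi; exact hi.elim) (by omega) (by omega) (by omega) (by omega) (by omega) (by omega)

theorem strTwo (m N a : ℕ) (hm : 2 ≤ m) (h : Str m N (fun i => i < a) (fun _ => False)) :
    Str m (2 * N) (fun i => i < a + 1) (fun _ => False) := by
  have := comb (I := Bool) m hm (fun _ _ => a) (fun _ _ => rfl) (fun _ _ _ _ _ _ => Or.inl rfl)
    (fun _ => N) (fun _ i => i < a) (fun _ _ => False) (fun _ => h) (fun i => i < a + 1)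
    (fun _ => False) (by intro _ i; omega) (by intro _ _ _; omega) (by intro i hi; exact hi.elim) (by
      intro i
      by_cases hi : i = a
      · subst hi
        right
        refine ⟨?_, fun _ => Or.inr (lt_irrefl _), fun _ _ _ _ => Or.inl (lt_irrefl _)⟩
        intro x y z e1 e2 e3
        cases x <;> cases y <;> cases z <;> simp_all
      · left
        intro _ _ _
        exact Ne.symm hi)
  simpa using this

theorem base_str (m n : ℕ) (hm : 2 ≤ m) (χ : Fin n → Fin n → Fin 2) (hsym : ∀ x y, χ x y = χ y x)
    (h : ¬ IsMonoCopy (⊤ : SimpleGraph (Fin n)) χ (wheelG m)) :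
    Str m n (fun i => i < 2) (fun _ => False) := by
  refine ⟨Fin n, inferInstance, fun x y => (χ x y).val, Fintype.card_fin n,
    fun x y => by simp only [hsym x y], ?_, fun x y _ => (χ x y).2, fun _ h => h.elim, ?_⟩
  · intro x y z _ _ _
    simp only
    omega
  · intro i v x hc hinj hp hl
    apply h
    have hi : i < 2 := by
      have := (hc 0 (by omega)).2
      simp only at this
      omega
    have sy : ∀ a b, RR (fun x y => (χ x y).val) i a b → RR (fun x y => (χ x y).val) i b a := by
      rintro a b ⟨h1, h2⟩
      exact ⟨h1.symm, by simp only at h2 ⊢; rw [hsym]; exact h2⟩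
    have main : ∀ a b : Fin (m + 1), a ≠ b →
        (a = 0 ∨ (1 ≤ a.val ∧ b.val = a.val + 1) ∨ (a.val = m ∧ b.val = 1)) →
        RR (fun x y => (χ x y).val) i (if a.val = 0 then v else x (a.val - 1))
          (if b.val = 0 then v else x (b.val - 1)) := by
      intro a b hab hr
      have h1 : a.val ≠ b.val := fun h => hab (Fin.ext h)
      have := a.2
      have := b.2
      rcases hr with rfl | ⟨h2, h3⟩ | ⟨h2, h3⟩
      · simp only [Fin.val_zero] at h1
        rw [if_pos (Fin.val_zero _), if_neg (Ne.symm h1)]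
        exact hc _ (by omega)
      · rw [if_neg (by omega), if_neg (by omega)]
        have e := hp (a.val - 1) (by omega)
        have e' : a.val - 1 + 1 = b.val - 1 := by omega
        rwa [e'] at e
      · rw [if_neg (by omega), if_neg (by omega), h2, h3]
        exact hl
    refine ⟨fun a => if a.val = 0 then v else x (a.val - 1), ⟨i, hi⟩, ?_, ?_⟩
    · intro a b hab
      have := a.2
      have := b.2
      apply Fin.ext
      simp only at hab
      split_ifs at hab with h1 h2 h2
      · omega
      · exact absurd hab (hc _ (by omega)).1
      · exact absurd hab.symm (hc _ (by omega)).1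
      · have := hinj _ _ (by omega) (by omega) hab
        omega
    · intro a b hab
      unfold wheelG at hab
      rw [SimpleGraph.fromRel_adj] at hab
      have : RR (fun x y => (χ x y).val) i (if a.val = 0 then v else x (a.val - 1))
          (if b.val = 0 then v else x (b.val - 1)) := by
        rcases hab.2 with h1 | h1
        · exact main a b hab.1 h1
        · exact sy _ _ (main b a hab.1.symm h1)
      exact ⟨this.1, Fin.ext this.2⟩

theorem final_str (m k N : ℕ) (hm : 2 ≤ m) (hk : 0 < k)
    (h : Str m N (fun i => i < k) (fun _ => False)) :
    ∃ χ : Fin N → Fin N → Fin k, (∀ x y, χ x y = χ y x) ∧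
      NoRainbowTriangle (⊤ : SimpleGraph (Fin N)) χ ∧
      ¬ IsMonoCopy (⊤ : SimpleGraph (Fin N)) χ (wheelG m) := by
  obtain ⟨V, _, χ, hcard, hsym, hrb, hC, -, hnw⟩ := h
  let e : Fin N ≃ V := (Fintype.equivFinOfCardEq hcard).symm
  let ψ : Fin N → Fin N → Fin k := fun x y =>
    if h : χ (e x) (e y) < k then ⟨χ (e x) (e y), h⟩ else ⟨0, hk⟩
  have hψ : ∀ x y, x ≠ y → (ψ x y).val = χ (e x) (e y) := by
    intro x y hxy
    simp only [ψ]
    rw [dif_pos (hC _ _ (e.injective.ne hxy))]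
  refine ⟨ψ, ?_, ?_, ?_⟩
  · intro x y
    simp only [ψ, hsym (e x) (e y)]
  · rintro ⟨x, y, z, h1, h2, h3, h4, h5, h6⟩
    simp only [SimpleGraph.top_adj] at h1 h2 h3
    rw [ne_eq, Fin.ext_iff, hψ _ _ h1, hψ _ _ h2] at h4
    rw [ne_eq, Fin.ext_iff, hψ _ _ h2, hψ _ _ h3] at h5
    rw [ne_eq, Fin.ext_iff, hψ _ _ h1, hψ _ _ h3] at h6
    have := hrb _ _ _ (e.injective.ne h1) (e.injective.ne h2) (e.injective.ne h3)
    tauto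
  · rintro ⟨f, i, hf, hadj⟩
    have key : ∀ a b : Fin (m + 1), (wheelG m).Adj a b → RR χ i (e (f a)) (e (f b)) := by
      intro a b hab
      obtain ⟨h1, h2⟩ := hadj a b hab
      rw [SimpleGraph.top_adj] at h1
      exact ⟨e.injective.ne h1, by rw [← hψ _ _ h1, h2]⟩
    refine hnw i (e (f 0)) (fun j => e (f (if h : j < m then ⟨j + 1, by omega⟩ else 0))) ?_ ?_ ?_ ?_
    · intro j hj
      apply key
      unfold wheelG
      rw [SimpleGraph.fromRel_adj]
      refine ⟨?_, Or.inl (Or.inl rfl)⟩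
      rw [dif_pos hj, ne_eq, Fin.ext_iff]
      simp
    · intro j j' hj hj' he
      have := hf (e.injective he)
      rw [dif_pos hj, dif_pos hj'] at this
      simpa using this
    · intro j hj
      apply key
      unfold wheelG
      rw [SimpleGraph.fromRel_adj, dif_pos (by omega), dif_pos hj]
      refine ⟨?_, Or.inl (Or.inr (Or.inl ?_))⟩
      · rw [ne_eq, Fin.ext_iff]; simp
      · simp
    · apply key
      unfold wheelG
      rw [SimpleGraph.fromRel_adj, dif_pos (by omega), dif_pos (by omega)]
      refine ⟨?_, Or.inl (Or.inr (Or.inr ?_))⟩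
      · rw [ne_eq, Fin.ext_iff]; simp; omega
      · simp; omega

theorem part_one (k m n c d : ℕ) (hk : 5 ≤ k) (hko : k % 2 = 1)
    (hm : 6 ≤ m) (hme : m % 2 = 0)
    (hcd : (m % 4 = 0 ∧ c = m - 2 ∧ d = m - 4) ∨ (m % 4 = 2 ∧ c = m - 1 ∧ d = m - 2))
    (h2 : ∃ χ : Fin n → Fin n → Fin 2, (∀ x y, χ x y = χ y x) ∧
      ¬ IsMonoCopy (⊤ : SimpleGraph (Fin n)) χ (wheelG m)) :
    ∃ N, N + 2 * d * (k - 3) = 2 * n + 10 * c * (5 ^ ((k - 3) / 2) - 1) ∧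
      ∃ χ : Fin N → Fin N → Fin k, (∀ x y, χ x y = χ y x) ∧
      NoRainbowTriangle (⊤ : SimpleGraph (Fin N)) χ ∧
      ¬ IsMonoCopy (⊤ : SimpleGraph (Fin N)) χ (wheelG m) := by
  obtain ⟨χ, hs, hn⟩ := h2
  obtain ⟨t, rfl⟩ : ∃ t, k = 2 * t + 3 := ⟨(k - 3) / 2, by omega⟩
  have e1 : 2 * t + 3 - 3 = 2 * t := by omega
  have e2 : 2 * t / 2 = t := by omega
  rw [e1, e2]
  obtain ⟨N, hN, hS⟩ := strG m c (if m % 4 = 0 then m / 4 - 1 else m / 4) d n (by omega) (by omega)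
    (by split_ifs <;> omega) (by split_ifs <;> omega) (by split_ifs <;> omega) hme (by omega)
    (base_str m n (by omega) χ hs hn) t
  refine ⟨2 * N, ?_, final_str m _ _ (by omega) (by omega) (strTwo m N _ (by omega) hS)⟩
  obtain ⟨u, hu⟩ : ∃ u, 5 ^ t = u + 1 := ⟨5 ^ t - 1, by have := Nat.pos_of_ne_zero (pow_ne_zero t (by norm_num : (5:ℕ) ≠ 0)); omega⟩
  rw [hu] at hN ⊢
  rw [Nat.add_sub_cancel]
  linarith

/-- Every coloring has a long sequence in which the color of a pair depends on the first entry. -/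
theorem ramsey_seq (k L : ℕ) : ∃ M : ℕ, ∀ (V : Type) (c : V → V → Fin k) (S : Finset V),
    M ≤ S.card → ∃ (x : ℕ → V) (g : ℕ → Fin k), (∀ i < L, x i ∈ S) ∧
      ∀ i j, i < j → j < L → x i ≠ x j ∧ c (x i) (x j) = g i := by
  classical
  induction L with
  | zero =>
    refine ⟨1, fun V c S hS => ?_⟩
    obtain ⟨v, hv⟩ := Finset.card_pos.1 (by omega : 0 < S.card)
    exact ⟨fun _ => v, fun _ => c v v, by intro i hi; omega, by intro i j _ hj; omega⟩
  | succ L ih =>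
    obtain ⟨M, hM⟩ := ih
    refine ⟨k * M + 2, fun V c S hS => ?_⟩
    obtain ⟨v, hv⟩ := Finset.card_pos.1 (by omega : 0 < S.card)
    have hcard : (S.erase v).card = S.card - 1 := Finset.card_erase_of_mem hv
    obtain ⟨a, -, ha⟩ := Finset.exists_lt_card_fiber_of_mul_lt_card_of_maps_to
      (s := S.erase v) (t := Finset.univ) (f := c v) (n := M) (fun _ _ => Finset.mem_univ _)
      (by rw [Finset.card_univ, Fintype.card_fin]; omega)
    obtain ⟨x, g, hx, hg⟩ := hM V c _ ha.le
    have hx' : ∀ i < L, x i ≠ v ∧ x i ∈ S ∧ c v (x i) = a := by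
      intro i hi
      have := hx i hi
      simp only [Finset.mem_filter, Finset.mem_erase] at this
      tauto
    refine ⟨fun i => if i = 0 then v else x (i - 1), fun i => if i = 0 then a else g (i - 1), ?_, ?_⟩
    · intro i hi
      by_cases h : i = 0
      · simpa [h] using hv
      · simp only [h, if_false]
        exact (hx' _ (by omega)).2.1
    · intro i j hij hj
      have hj0 : j ≠ 0 := by omega
      by_cases h : i = 0
      · simp only [h, hj0, if_true, if_false]
        have := hx' (j - 1) (by omega)
        exact ⟨this.1.symm, this.2.2⟩
      · simp only [h, hj0, if_false]
        exact hg _ _ (by omega) (by omega)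

theorem ramsey (k r : ℕ) : ∃ M : ℕ, ∀ (c : Fin M → Fin M → Fin k),
    (∀ x y, c x y = c y x) → ∃ (f : Fin r → Fin M) (i : Fin k), Function.Injective f ∧
      ∀ a b, a ≠ b → c (f a) (f b) = i := by
  obtain ⟨M, hM⟩ := ramsey_seq k (k * r + 1)
  refine ⟨M, fun c hs => ?_⟩
  obtain ⟨x, g, -, hg⟩ := hM (Fin M) c Finset.univ (by simp)
  obtain ⟨a, -, ha⟩ := Finset.exists_lt_card_fiber_of_mul_lt_card_of_maps_to
      (s := Finset.range (k * r + 1)) (t := Finset.univ) (f := g) (n := r)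
      (fun _ _ => Finset.mem_univ _)
      (by rw [Finset.card_univ, Fintype.card_fin, Finset.card_range]; omega)
  obtain ⟨T, hT, hTc⟩ := Finset.exists_subset_card_eq ha.le
  let e := T.orderEmbOfFin hTc
  have he : ∀ i, e i < k * r + 1 ∧ g (e i) = a := by
    intro i
    have := hT (T.orderEmbOfFin_mem hTc i)
    simpa using this
  have key : ∀ i j, i < j → x (e i) ≠ x (e j) ∧ c (x (e i)) (x (e j)) = a := by
    intro i j hij
    have := hg (e i) (e j) (e.strictMono hij) (he j).1
    rwa [(he i).2] at this
  refine ⟨fun i => x (e i), a, ?_, ?_⟩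
  · intro i j hij
    by_contra hne
    rcases lt_or_gt_of_ne hne with h | h
    · exact (key i j h).1 hij
    · exact (key j i h).1 hij.symm
  · intro i j hne
    rcases lt_or_gt_of_ne hne with h | h
    · exact (key i j h).2
    · rw [hs]; exact (key j i h).2

/-- A good coloring on `N` vertices gives `N < GR_k`. -/
theorem lt_GR (k m N : ℕ) (h : ∃ χ : Fin N → Fin N → Fin k, (∀ x y, χ x y = χ y x) ∧
      NoRainbowTriangle (⊤ : SimpleGraph (Fin N)) χ ∧
      ¬ IsMonoCopy (⊤ : SimpleGraph (Fin N)) χ (wheelG m)) : N < GallaiRamsey k (wheelG m) := by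
  obtain ⟨χ, hs, hr, hn⟩ := h
  by_contra hlt
  have hne : {N | ∀ c : Fin N → Fin N → Fin k, (∀ x y, c x y = c y x) →
      NoRainbowTriangle (⊤ : SimpleGraph (Fin N)) c →
      IsMonoCopy (⊤ : SimpleGraph (Fin N)) c (wheelG m)}.Nonempty := by
    obtain ⟨M, hM⟩ := ramsey k (m + 1)
    refine ⟨M, fun c hc _ => ?_⟩
    obtain ⟨f, i, hf, hi⟩ := hM c hc
    exact ⟨f, i, hf, fun a b hab => ⟨hf.ne hab.ne, hi a b hab.ne⟩⟩
  have hmem := Nat.sInf_mem hne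
  change ∀ c : Fin (GallaiRamsey k (wheelG m)) → Fin (GallaiRamsey k (wheelG m)) → Fin k, _ at hmem
  have hle : GallaiRamsey k (wheelG m) ≤ N := by omega
  obtain ⟨f, i, hf, hi⟩ := hmem (fun x y => χ (Fin.castLE hle x) (Fin.castLE hle y))
    (fun x y => hs _ _) (by
      rintro ⟨x, y, z, h1, h2, h3, h4⟩
      have hinj := Fin.castLE_injective hle
      exact hr ⟨_, _, _, hinj.ne h1, hinj.ne h2, hinj.ne h3, h4⟩)
  have hinj := Fin.castLE_injective hle
  exact hn ⟨fun a => Fin.castLE hle (f a), i, hinj.comp hf, fun a b hab =>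
    ⟨hinj.ne (hi a b hab).1, (hi a b hab).2⟩⟩

end GW

/-- Odd `k ≥ 5`, even `m ≥ 6`: from a 2-coloring of `K_n` with no monochromatic
wheel `W_m`, one gets a Gallai `k`-coloring of a larger complete graph with no
monochromatic `W_m`; consequently the Gallai–Ramsey lower bound. -/
theorem wheel_gallai_lower_odd_k (k m n c d : ℕ) (hk : 5 ≤ k) (hko : k % 2 = 1)
    (hm : 6 ≤ m) (hme : m % 2 = 0)
    (hcd : (m % 4 = 0 ∧ c = m - 2 ∧ d = m - 4) ∨ (m % 4 = 2 ∧ c = m - 1 ∧ d = m - 2))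
    (h2 : ∃ χ : Fin n → Fin n → Fin 2, (∀ x y, χ x y = χ y x) ∧
      ¬ IsMonoCopy (⊤ : SimpleGraph (Fin n)) χ (wheelG m)) :
    (∃ χ : Fin (2 * n + 10 * c * (5 ^ ((k - 3) / 2) - 1) - 2 * d * (k - 3)) →
        Fin (2 * n + 10 * c * (5 ^ ((k - 3) / 2) - 1) - 2 * d * (k - 3)) → Fin k,
      (∀ x y, χ x y = χ y x) ∧
      NoRainbowTriangle (⊤ : SimpleGraph (Fin (2 * n + 10 * c * (5 ^ ((k - 3) / 2) - 1) - 2 * d * (k - 3)))) χ ∧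
      ¬ IsMonoCopy (⊤ : SimpleGraph (Fin (2 * n + 10 * c * (5 ^ ((k - 3) / 2) - 1) - 2 * d * (k - 3)))) χ (wheelG m)) ∧
    2 * (Ramsey2 (wheelG m) + 5 * c * (5 ^ ((k - 3) / 2) - 1) - d * (k - 3)) - 1 ≤
      GallaiRamsey k (wheelG m) := by
  have hp1 := fun n' h => GW.part_one k m n' c d hk hko hm hme hcd h
  refine ⟨?_, ?_⟩
  · obtain ⟨N, hN, h⟩ := hp1 n h2
    have : 2 * n + 10 * c * (5 ^ ((k - 3) / 2) - 1) - 2 * d * (k - 3) = N := by omega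
    rw [this]
    exact h
  · have hex : ∃ χ : Fin (Ramsey2 (wheelG m) - 1) → Fin (Ramsey2 (wheelG m) - 1) → Fin 2,
        (∀ x y, χ x y = χ y x) ∧ ¬ IsMonoCopy (⊤ : SimpleGraph _) χ (wheelG m) := by
      by_cases h0 : Ramsey2 (wheelG m) = 0
      · rw [h0]
        refine ⟨fun _ _ => 0, fun _ _ => rfl, ?_⟩
        rintro ⟨f, -⟩
        exact (f 0).elim0
      · have : Ramsey2 (wheelG m) - 1 ∉ {N | ∀ c : Fin N → Fin N → Fin 2,
            (∀ x y, c x y = c y x) → IsMonoCopy (⊤ : SimpleGraph (Fin N)) c (wheelG m)} := by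
          apply Nat.notMem_of_lt_sInf
          change _ < Ramsey2 (wheelG m)
          omega
        simp only [Set.mem_ofPred_eq, not_forall] at this
        obtain ⟨χ, h1, h3⟩ := this
        exact ⟨χ, h1, h3⟩
    obtain ⟨N, hN, h⟩ := hp1 _ hex
    have hlt := GW.lt_GR k m N h
    have e1 : 10 * c * (5 ^ ((k - 3) / 2) - 1) = 2 * (5 * c * (5 ^ ((k - 3) / 2) - 1)) := by ring
    have e2 : 2 * d * (k - 3) = 2 * (d * (k - 3)) := by ring
    rw [e1, e2] at hN
    omega
end

section
/- For every even integer m ≥ 6, there exists a Gallai 3-coloring of the complete graph on 5m vertices with no monochromatic copy of the wheel W_m. Consequently GR_3(W_m) ≥ 5m + 1. -/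
open SimpleGraph

/-- Multicolour Ramsey theorem, finite form, with three colours. -/
theorem ramsey3 (s : ℕ) : ∀ a : Fin 3 → ℕ, ∑ i, a i = s →
    ∃ N : ℕ, ∀ (M : ℕ) (c : Fin M → Fin M → Fin 3), (∀ x y, c x y = c y x) →
      ∀ S : Finset (Fin M), N ≤ S.card →
        ∃ i, ∃ K : Finset (Fin M), K ⊆ S ∧ K.card = a i ∧
          ∀ x ∈ K, ∀ y ∈ K, x ≠ y → c x y = i := by
  induction s with
  | zero =>
    intro a ha
    refine ⟨0, fun M c _ S _ => ⟨0, ∅, by simp, ?_, by simp⟩⟩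
    have := (Finset.sum_eq_zero_iff.mp ha) 0 (Finset.mem_univ _)
    simp [this]
  | succ s ih =>
    intro a ha
    by_cases h0 : ∃ i, a i = 0
    · obtain ⟨i, hi⟩ := h0
      exact ⟨0, fun M c _ S _ => ⟨i, ∅, by simp, by simp [hi], by simp⟩⟩
    push Not at h0
    have hstep : ∀ i : Fin 3, ∃ N : ℕ, ∀ (M : ℕ) (c : Fin M → Fin M → Fin 3),
        (∀ x y, c x y = c y x) → ∀ S : Finset (Fin M), N ≤ S.card →
        ∃ j, ∃ K : Finset (Fin M), K ⊆ S ∧ K.card = Function.update a i (a i - 1) j ∧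
          ∀ x ∈ K, ∀ y ∈ K, x ≠ y → c x y = j := by
      intro i
      apply ih
      have h1 := h0 0
      have h2 := h0 1
      have h3 := h0 2
      rw [Fin.sum_univ_three] at ha ⊢
      fin_cases i <;> simp [Function.update] <;> omega
    choose N hN using hstep
    refine ⟨(∑ i, N i) + 1, fun M c hc S hS => ?_⟩
    obtain ⟨v, hv⟩ : S.Nonempty := Finset.card_pos.mp (by omega)
    have hcard : (S.erase v).card = ∑ i, ((S.erase v).filter (fun x => c v x = i)).card :=
      Finset.card_eq_sum_card_fiberwise (fun x _ => by simp)
    have hle : ∑ i, N i ≤ ∑ i, ((S.erase v).filter (fun x => c v x = i)).card := by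
      rw [← hcard, Finset.card_erase_of_mem hv]; omega
    obtain ⟨i, -, hi⟩ := Finset.exists_le_of_sum_le Finset.univ_nonempty hle
    obtain ⟨j, K, hKS, hKc, hK⟩ := hN i M c hc _ hi
    have hKm : ∀ x ∈ K, x ≠ v ∧ x ∈ S ∧ c v x = i := by
      intro x hx
      have := hKS hx
      simp only [Finset.mem_filter, Finset.mem_erase] at this
      tauto
    by_cases hji : j = i
    · subst hji
      have hvK : v ∉ K := fun h => (hKm v h).1 rfl
      refine ⟨j, insert v K, ?_, ?_, ?_⟩
      · intro x hx
        rcases Finset.mem_insert.mp hx with rfl | hx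
        · exact hv
        · exact (hKm x hx).2.1
      · rw [Finset.card_insert_of_notMem hvK, hKc]
        have := h0 j
        simp; omega
      · intro x hx y hy hxy
        rcases Finset.mem_insert.mp hx with rfl | hx' <;>
          rcases Finset.mem_insert.mp hy with rfl | hy'
        · exact absurd rfl hxy
        · exact (hKm y hy').2.2
        · rw [hc]; exact (hKm x hx').2.2
        · exact hK x hx' y hy' hxy
    · refine ⟨j, K, fun x hx => (hKm x hx).2.1, ?_, hK⟩
      rw [hKc, Function.update_of_ne hji]

/-- The pentagon colouring of five blocks, with the third colour inside a block. -/
def pent (x y : Fin 5) : Fin 3 :=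
  if x = y then 2 else if x = y + 1 ∨ y = x + 1 then 0 else 1

theorem pent_symm : ∀ x y, pent x y = pent y x := by decide

theorem pent_gallai : ∀ x y z, ¬ (pent x y ≠ pent y z ∧ pent y z ≠ pent x z ∧
    pent x y ≠ pent x z) := by decide

theorem pent_mono : ∀ x y z, pent x y = pent y z → pent x z = pent y z →
    pent x y = 2 := by decide

theorem pent_two : ∀ x y, pent x y = 2 → x = y := by decide

theorem exists_coloring (m : ℕ) (hm : 6 ≤ m) :
    ∃ c : Fin (5 * m) → Fin (5 * m) → Fin 3, (∀ x y, c x y = c y x) ∧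
      NoRainbowTriangle (⊤ : SimpleGraph (Fin (5 * m))) c ∧
      ¬ IsMonoCopy (⊤ : SimpleGraph (Fin (5 * m))) c (wheelG m) := by
  let e : Fin (5 * m) ≃ Fin 5 × Fin m := finProdFinEquiv.symm
  refine ⟨fun x y => pent (e x).1 (e y).1, fun x y => pent_symm _ _, ?_, ?_⟩
  · rintro ⟨x, y, z, -, -, -, h⟩
    exact pent_gallai _ _ _ h
  · rintro ⟨f, i, hf, h⟩
    have hcen : ∀ b : Fin (m + 1), b ≠ 0 → (wheelG m).Adj 0 b := by
      intro b hb
      simp [wheelG, SimpleGraph.fromRel_adj, hb.symm]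
    let u : Fin (m + 1) := ⟨1, by omega⟩
    let w : Fin (m + 1) := ⟨2, by omega⟩
    have hu : u ≠ 0 := by simp [u, Fin.ext_iff]
    have hw : w ≠ 0 := by simp [w, Fin.ext_iff]
    have huw : (wheelG m).Adj u w := by
      simp [wheelG, SimpleGraph.fromRel_adj, u, w]
    have h1 := (h _ _ (hcen u hu)).2
    have h2 := (h _ _ (hcen w hw)).2
    have h3 := (h _ _ huw).2
    have hi : i = 2 := by
      rw [← h1]
      exact pent_mono _ _ _ (h1.trans h3.symm) (h2.trans h3.symm)
    subst hi
    have hall : ∀ b, (e (f 0)).1 = (e (f b)).1 := by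
      intro b
      by_cases hb : b = 0
      · rw [hb]
      · exact pent_two _ _ (h _ _ (hcen b hb)).2
    have hinj : Function.Injective (fun b => (e (f b)).2) := by
      intro a b hab
      exact hf (e.injective (Prod.ext ((hall a).symm.trans (hall b)) hab))
    have := Fintype.card_le_of_injective _ hinj
    simp at this

/-- For every even `m ≥ 6` there is a Gallai 3-coloring of `K_{5m}` with no
monochromatic wheel `W_m`; consequently `GR_3(W_m) ≥ 5m + 1`. -/
theorem wheel_gallai3_lower_5m (m : ℕ) (hm : 6 ≤ m) (hme : m % 2 = 0) :
    (∃ c : Fin (5 * m) → Fin (5 * m) → Fin 3, (∀ x y, c x y = c y x) ∧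
      NoRainbowTriangle (⊤ : SimpleGraph (Fin (5 * m))) c ∧
      ¬ IsMonoCopy (⊤ : SimpleGraph (Fin (5 * m))) c (wheelG m)) ∧
    5 * m + 1 ≤ GallaiRamsey 3 (wheelG m) := by
  refine ⟨exists_coloring m hm, ?_⟩
  unfold GallaiRamsey
  apply le_csInf
  · obtain ⟨N, hN⟩ := ramsey3 _ (fun _ => m + 1) rfl
    refine ⟨N, fun c hc _ => ?_⟩
    obtain ⟨i, K, -, hKc, hK⟩ := hN N c hc Finset.univ (by simp)
    refine ⟨K.orderEmbOfFin hKc, i, (K.orderEmbOfFin hKc).injective, fun a b hab => ?_⟩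
    have hne : K.orderEmbOfFin hKc a ≠ K.orderEmbOfFin hKc b :=
      fun h => hab.ne ((K.orderEmbOfFin hKc).injective h)
    exact ⟨by simpa using hab.ne, hK _ (Finset.orderEmbOfFin_mem _ _ _) _
      (Finset.orderEmbOfFin_mem _ _ _) hne⟩
  · intro N hN
    by_contra hlt
    have hle : N ≤ 5 * m := by omega
    obtain ⟨c, hc, hg, hw⟩ := exists_coloring m hm
    apply hw
    have hinj := Fin.castLE_injective hle
    obtain ⟨f, i, hf, h⟩ := hN (fun x y => c (Fin.castLE hle x) (Fin.castLE hle y))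
      (fun x y => hc _ _) (by
        rintro ⟨x, y, z, h1, h2, h3, h⟩
        exact hg ⟨_, _, _, fun e => h1 (hinj e), fun e => h2 (hinj e),
          fun e => h3 (hinj e), h⟩)
    exact ⟨fun a => Fin.castLE hle (f a), i, hinj.comp hf, fun a b hab =>
      ⟨fun e => (h a b hab).1 (hinj e), (h a b hab).2⟩⟩
end

section
/- Let m ≥ 6 be even. Suppose there exists an edge 2-coloring of the complete graph on n vertices with no monochromatic copy of the wheel W_m. Then there exists a Gallai 3-coloring of the complete graph on 2n vertices with no monochromatic copy of W_m. Consequently GR_3(W_m) ≥ 2·R_2(W_m) − 1. -/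
open SimpleGraph

/-- Multicolor Ramsey theorem for three colors, on finsets. -/
lemma ramsey_three_aux (s : ℕ) : ∀ a : Fin 3 → ℕ, ∑ i, a i = s →
    ∃ N : ℕ, ∀ (M : ℕ) (c : Fin M → Fin M → Fin 3), (∀ x y, c x y = c y x) →
      ∀ S : Finset (Fin M), N ≤ S.card →
      ∃ i, ∃ T ⊆ S, T.card = a i ∧ ∀ x ∈ T, ∀ y ∈ T, x ≠ y → c x y = i := by
  induction s with
  | zero =>
    intro a ha
    refine ⟨0, fun M c _ S _ => ⟨0, ∅, by simp, ?_, by simp⟩⟩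
    have : a 0 = 0 := by
      rw [Finset.sum_eq_zero_iff] at ha
      exact ha 0 (Finset.mem_univ _)
    simp [this]
  | succ s ih =>
    intro a ha
    by_cases h0 : ∃ i, a i = 0
    · obtain ⟨i, hi⟩ := h0
      exact ⟨0, fun M c _ S _ => ⟨i, ∅, by simp, by simp [hi], by simp⟩⟩
    push Not at h0
    have hstep : ∀ i, ∑ j, Function.update a i (a i - 1) j = s := by
      intro i
      have h1 := h0 i
      rw [Finset.sum_update_of_mem (Finset.mem_univ i)]
      rw [← Finset.add_sum_erase _ _ (Finset.mem_univ i)] at ha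
      rw [Finset.sdiff_singleton_eq_erase]
      omega
    choose N hN using fun i => ih _ (hstep i)
    refine ⟨1 + ∑ i, N i, fun M c hc S hS => ?_⟩
    have hne : S.Nonempty := by
      rw [← Finset.card_pos]; omega
    obtain ⟨v, hv⟩ := hne
    have hcard : (S.erase v).card = ∑ i, ((S.erase v).filter (fun x => c v x = i)).card :=
      Finset.card_eq_sum_card_fiberwise (fun _ _ => Finset.mem_coe.2 (Finset.mem_univ _))
    have hex : ∃ i, N i ≤ ((S.erase v).filter (fun x => c v x = i)).card := by
      by_contra hcon
      push Not at hcon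
      have := Finset.sum_le_sum (s := Finset.univ) (fun i _ => (hcon i).le)
      have h2 := Finset.sum_lt_sum_of_nonempty (s := (Finset.univ : Finset (Fin 3)))
        ⟨0, Finset.mem_univ _⟩ (fun i _ => hcon i)
      rw [← hcard, Finset.card_erase_of_mem hv] at h2
      omega
    obtain ⟨i, hi⟩ := hex
    obtain ⟨j, T, hTS, hTc, hT⟩ := hN i M c hc _ hi
    have hTS' : T ⊆ S := fun x hx =>
      Finset.mem_of_mem_erase (Finset.mem_of_mem_filter _ (hTS hx))
    by_cases hji : j = i
    · subst hji
      have hvT : v ∉ T := fun h => by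
        have := hTS h
        simp at this
      refine ⟨j, insert v T, Finset.insert_subset hv hTS', ?_, ?_⟩
      · rw [Finset.card_insert_of_notMem hvT, hTc, Function.update_self]
        have := h0 j
        omega
      · have hvc : ∀ x ∈ T, c v x = j := fun x hx => (Finset.mem_filter.1 (hTS hx)).2
        intro x hx y hy hxy
        rcases Finset.mem_insert.1 hx with rfl | hxT
        · rcases Finset.mem_insert.1 hy with rfl | hyT
          · exact absurd rfl hxy
          · exact hvc y hyT
        · rcases Finset.mem_insert.1 hy with rfl | hyT
          · rw [hc]; exact hvc x hxT
          · exact hT x hxT y hyT hxy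
    · exact ⟨j, T, hTS', by rw [hTc, Function.update_of_ne hji], hT⟩

lemma exists_mono_three {r : ℕ} (H : SimpleGraph (Fin r)) :
    ∃ N : ℕ, ∀ c : Fin N → Fin N → Fin 3, (∀ x y, c x y = c y x) →
      IsMonoCopy (⊤ : SimpleGraph (Fin N)) c H := by
  obtain ⟨N, hN⟩ := ramsey_three_aux _ (fun _ => r) rfl
  refine ⟨N, fun c hc => ?_⟩
  obtain ⟨i, T, -, hTc, hT⟩ := hN N c hc Finset.univ (by simp)
  refine ⟨T.orderEmbOfFin hTc, i, (T.orderEmbOfFin hTc).injective, fun a b hab => ?_⟩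
  have hne : T.orderEmbOfFin hTc a ≠ T.orderEmbOfFin hTc b :=
    fun h => hab.ne ((T.orderEmbOfFin hTc).injective h)
  exact ⟨hne, hT _ (Finset.orderEmbOfFin_mem _ _ _) _ (Finset.orderEmbOfFin_mem _ _ _) hne⟩

lemma wheel_adj_zero {m : ℕ} (a : Fin (m + 1)) (ha : a ≠ 0) : (wheelG m).Adj 0 a := by
  rw [wheelG, SimpleGraph.fromRel_adj]
  exact ⟨ha.symm, Or.inl (Or.inl rfl)⟩

/-- The doubling construction. -/
lemma wheel_doubling (m : ℕ) (hm : 6 ≤ m) (n : ℕ)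
    (h2 : ∃ χ : Fin n → Fin n → Fin 2, (∀ x y, χ x y = χ y x) ∧
      ¬ IsMonoCopy (⊤ : SimpleGraph (Fin n)) χ (wheelG m)) :
    ∃ c : Fin (2 * n) → Fin (2 * n) → Fin 3, (∀ x y, c x y = c y x) ∧
      NoRainbowTriangle (⊤ : SimpleGraph (Fin (2 * n))) c ∧
      ¬ IsMonoCopy (⊤ : SimpleGraph (Fin (2 * n))) c (wheelG m) := by
  obtain ⟨χ, hχ, hno⟩ := h2
  let e : Fin (2 * n) ≃ Fin 2 × Fin n := finProdFinEquiv.symm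
  refine ⟨fun x y => if (e x).1 = (e y).1 then (χ (e x).2 (e y).2).castSucc else 2, ?_, ?_, ?_⟩
  · intro x y
    simp only [hχ (e x).2 (e y).2, eq_comm (a := (e x).1)]
  · rintro ⟨x, y, z, -, -, -, h1, h2, h3⟩
    dsimp only at h1 h2 h3
    generalize χ (e x).2 (e y).2 = p at *
    generalize χ (e y).2 (e z).2 = q at *
    generalize χ (e x).2 (e z).2 = r at *
    generalize (e x).1 = a at *
    generalize (e y).1 = b at *
    generalize (e z).1 = d at *
    revert p q r a b d
    decide
  · rintro ⟨f, i, hf, hmono⟩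
    dsimp only at hmono
    by_cases hi : i = 2
    · subst hi
      have key : ∀ a b, (wheelG m).Adj a b → (e (f a)).1 ≠ (e (f b)).1 := by
        intro a b hab h
        have := (hmono a b hab).2
        rw [if_pos h] at this
        generalize χ (e (f a)).2 (e (f b)).2 = p at this
        revert p
        decide
      have k1 := key 0 ⟨1, by omega⟩ (wheel_adj_zero _ (by simp [Fin.ext_iff]))
      have k2 := key 0 ⟨2, by omega⟩ (wheel_adj_zero _ (by simp [Fin.ext_iff]))
      have k3 := key ⟨1, by omega⟩ ⟨2, by omega⟩ (by
        rw [wheelG, SimpleGraph.fromRel_adj]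
        exact ⟨by simp, Or.inl (Or.inr (Or.inl ⟨le_refl _, rfl⟩))⟩)
      omega
    · have key : ∀ a b, (wheelG m).Adj a b → (e (f a)).1 = (e (f b)).1 := by
        intro a b hab
        by_contra h
        have := (hmono a b hab).2
        rw [if_neg h] at this
        exact hi this.symm
      have side : ∀ a, (e (f a)).1 = (e (f 0)).1 := by
        intro a
        by_cases ha : a = 0
        · rw [ha]
        · exact (key 0 a (wheel_adj_zero a ha)).symm
      have hinj : Function.Injective (fun a => (e (f a)).2) := by
        intro a b hab
        apply hf
        apply e.injective
        exact Prod.ext ((side a).trans (side b).symm) hab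
      have hi' : i.val < 2 := by
        have := i.isLt
        have h' : i.val ≠ 2 := fun h => hi (Fin.ext h)
        omega
      refine hno ⟨fun a => (e (f a)).2, ⟨i.val, hi'⟩, hinj, fun a b hab => ⟨?_, ?_⟩⟩
      · exact fun h => hab.ne (hinj h)
      · have := (hmono a b hab).2
        rw [if_pos (key a b hab)] at this
        apply Fin.ext
        have hval := congrArg Fin.val this
        exact hval

/-- For even `m ≥ 6`: from a 2-coloring of `K_n` with no monochromatic wheel
`W_m` one gets a Gallai 3-coloring of `K_{2n}` with no monochromatic `W_m`;
consequently `GR_3(W_m) ≥ 2·R_2(W_m) − 1`. -/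
theorem wheel_gallai3_lower_doubling (m : ℕ) (hm : 6 ≤ m) (hme : m % 2 = 0) (n : ℕ)
    (h2 : ∃ χ : Fin n → Fin n → Fin 2, (∀ x y, χ x y = χ y x) ∧
      ¬ IsMonoCopy (⊤ : SimpleGraph (Fin n)) χ (wheelG m)) :
    (∃ c : Fin (2 * n) → Fin (2 * n) → Fin 3, (∀ x y, c x y = c y x) ∧
      NoRainbowTriangle (⊤ : SimpleGraph (Fin (2 * n))) c ∧
      ¬ IsMonoCopy (⊤ : SimpleGraph (Fin (2 * n))) c (wheelG m)) ∧
    2 * Ramsey2 (wheelG m) - 1 ≤ GallaiRamsey 3 (wheelG m) := by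
  refine ⟨wheel_doubling m hm n h2, ?_⟩
  have hmem : GallaiRamsey 3 (wheelG m) ∈ {N | ∀ c : Fin N → Fin N → Fin 3,
      (∀ x y, c x y = c y x) → NoRainbowTriangle (⊤ : SimpleGraph (Fin N)) c →
      IsMonoCopy (⊤ : SimpleGraph (Fin N)) c (wheelG m)} := by
    apply Nat.sInf_mem
    obtain ⟨N, hN⟩ := exists_mono_three (wheelG m)
    exact ⟨N, fun c hc _ => hN c hc⟩
  by_contra hlt
  have hR : Ramsey2 (wheelG m) - 1 < Ramsey2 (wheelG m) := by omega
  have hnot := Nat.notMem_of_lt_sInf (show Ramsey2 (wheelG m) - 1 < sInf _ from hR)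
  rw [Set.mem_ofPred_eq] at hnot
  push Not at hnot
  obtain ⟨c, hc, hrb, hcopy⟩ := wheel_doubling m hm _ hnot
  have hle : GallaiRamsey 3 (wheelG m) ≤ 2 * (Ramsey2 (wheelG m) - 1) := by omega
  have hcl := Fin.castLE_injective hle
  obtain ⟨f, i, hf, hmono⟩ := hmem (fun x y => c (Fin.castLE hle x) (Fin.castLE hle y))
    (fun x y => hc _ _)
    (by
      rintro ⟨x, y, z, h1, h2, h3, h⟩
      exact hrb ⟨_, _, _, fun h => h1 (hcl h), fun h => h2 (hcl h), fun h => h3 (hcl h), h⟩)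
  exact hcopy ⟨fun a => Fin.castLE hle (f a), i, hcl.comp hf,
    fun a b hab => ⟨fun h => (hmono a b hab).1 (hcl h), (hmono a b hab).2⟩⟩
end

section
/- For every even integer n ≥ 4, every edge 2-coloring of the complete graph on 2n−1 vertices contains a monochromatic copy of K^+_{1,n}. Consequently R(K^+_{1,n}, K^+_{1,n}) ≤ 2n−1. -/
open SimpleGraph

lemma spCopy {V : Type*} [DecidableEq V] {n : ℕ} (hn : 4 ≤ n) (c : V → V → Fin 2)
    (hc : ∀ x y, c x y = c y x) (i : Fin 2) (v w u : V) (S : Finset V) (hS : S.card = n)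
    (hv : v ∉ S) (hw : w ∈ S) (hu : u ∉ S) (huv : u ≠ v)
    (hi : ∀ x ∈ S, c v x = i) (hwu : c w u = i) :
    IsMonoCopy (⊤ : SimpleGraph V) c (starPlusG n) := by
  have hcard : (S.erase w).card = n - 1 := by rw [Finset.card_erase_of_mem hw, hS]
  let e := (Finset.equivFinOfCardEq hcard).symm
  have he : ∀ k, ((e k : V) ∈ S ∧ (e k : V) ≠ w) := fun k => by
    have := (e k).2
    rw [Finset.mem_erase] at this
    exact ⟨this.2, this.1⟩
  let f : Fin (n + 2) → V := fun k => if k.val = 0 then v else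
    if h : k.val - 1 < n - 1 then (e ⟨k.val - 1, h⟩ : V) else if k.val = n then w else u
  have f0 : ∀ k : Fin (n + 2), k.val = 0 → f k = v := fun k h => by
    simp only [f]; rw [if_pos h]
  have f1 : ∀ k : Fin (n + 2), k.val ≠ 0 → ∀ h : k.val - 1 < n - 1,
      f k = e ⟨k.val - 1, h⟩ := fun k h h' => by simp only [f]; rw [if_neg h, dif_pos h']
  have f2 : ∀ k : Fin (n + 2), k.val = n → f k = w := fun k h => by
    simp only [f]; rw [if_neg (by omega), dif_neg (by omega), if_pos h]
  have f3 : ∀ k : Fin (n + 2), k.val = n + 1 → f k = u := fun k h => by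
    simp only [f]; rw [if_neg (by omega), dif_neg (by omega), if_neg (by omega)]
  have hvw : v ≠ w := fun h => hv (h ▸ hw)
  have huw : u ≠ w := fun h => hu (h ▸ hw)
  have fS : ∀ k : Fin (n + 2), k.val ≠ 0 → k.val ≤ n → f k ∈ S := fun k h h' => by
    by_cases h2 : k.val = n
    · rw [f2 k h2]; exact hw
    · rw [f1 k h (by omega)]; exact (he _).1
  have finj : Function.Injective f := by
    have key : ∀ a b : Fin (n + 2), a.val < b.val → f a ≠ f b := by
      intro a b hab heq
      have hb := b.2
      by_cases hbn : b.val = n + 1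
      · rw [f3 b hbn] at heq
        by_cases ha : a.val = 0
        · rw [f0 a ha] at heq; exact huv heq.symm
        · exact hu (heq ▸ fS a ha (by omega))
      · have hbS := fS b (by omega) (by omega)
        by_cases ha : a.val = 0
        · rw [f0 a ha] at heq; exact hv (heq ▸ hbS)
        · rw [f1 a ha (by omega)] at heq
          by_cases hbn' : b.val = n
          · rw [f2 b hbn'] at heq; exact (he _).2 heq
          · rw [f1 b (by omega) (by omega)] at heq
            have := e.injective (Subtype.ext heq)
            simp only [Fin.mk.injEq] at this
            omega
    intro a b heq
    rcases lt_trichotomy a.val b.val with h | h | h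
    · exact absurd heq (key a b h)
    · exact Fin.ext h
    · exact absurd heq.symm (key b a h)
  refine ⟨f, i, finj, ?_⟩
  have key : ∀ a b : Fin (n + 2), a ≠ b →
      ((a = 0 ∧ b.val ≤ n) ∨ (a.val = n ∧ b.val = n + 1)) → c (f a) (f b) = i := by
    rintro a b hab (⟨ha, hb⟩ | ⟨ha, hb⟩)
    · subst ha
      rw [f0 0 (by simp)]
      exact hi _ (fS b (fun h => hab (Fin.ext (by simp [h]))) hb)
    · rw [f2 a ha, f3 b hb]; exact hwu
  intro a b hab
  rw [starPlusG, SimpleGraph.fromRel_adj] at hab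
  refine ⟨fun h => hab.1 (finj h), ?_⟩
  rcases hab with ⟨h, h1 | h1⟩
  · exact key a b h h1
  · rw [hc]; exact key b a h.symm h1

lemma spMain (n : ℕ) (hn : 4 ≤ n) (hne : n % 2 = 0)
    (c : Fin (2 * n - 1) → Fin (2 * n - 1) → Fin 2) (hc : ∀ x y, c x y = c y x) :
    IsMonoCopy (⊤ : SimpleGraph (Fin (2 * n - 1))) c (starPlusG n) := by
  classical
  let N : Fin 2 → Fin (2 * n - 1) → Finset (Fin (2 * n - 1)) := fun i v =>
    Finset.univ.filter (fun u => v ≠ u ∧ c v u = i)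
  have hN : ∀ i v u, u ∈ N i v ↔ v ≠ u ∧ c v u = i := by simp [N]
  have hsum : ∀ v, (N 0 v).card + (N 1 v).card = 2 * n - 2 := by
    intro v
    have hd : Disjoint (N 0 v) (N 1 v) := by
      rw [Finset.disjoint_left]
      intro u h0 h1
      rw [hN] at h0 h1
      have := h0.2.symm.trans h1.2
      exact absurd this (by decide)
    rw [← Finset.card_union_of_disjoint hd]
    have : N 0 v ∪ N 1 v = Finset.univ.erase v := by
      ext u
      simp only [Finset.mem_union, hN, Finset.mem_erase, Finset.mem_univ, and_true]
      have : c v u = 0 ∨ c v u = 1 := by omega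
      constructor
      · rintro (h | h) <;> exact h.1.symm
      · intro h
        rcases this with h' | h'
        · exact Or.inl ⟨Ne.symm h, h'⟩
        · exact Or.inr ⟨Ne.symm h, h'⟩
    rw [this, Finset.card_erase_of_mem (Finset.mem_univ _), Finset.card_univ, Fintype.card_fin]
    omega
  have hex : ∃ i v, n ≤ (N i v).card := by
    by_contra! hlt
    let G : SimpleGraph (Fin (2 * n - 1)) :=
      SimpleGraph.fromRel (fun x y => c x y = 0)
    have hdeg : ∀ v, G.degree v = n - 1 := by
      intro v
      have h1 := hlt 0 v
      have h2 := hlt 1 v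
      have h3 := hsum v
      have : G.neighborFinset v = N 0 v := by
        ext u
        rw [SimpleGraph.mem_neighborFinset, hN]
        simp only [G, SimpleGraph.fromRel_adj, hc u v, or_self]
      rw [← SimpleGraph.card_neighborFinset_eq_degree, this]
      omega
    have hs := G.sum_degrees_eq_twice_card_edges
    simp only [hdeg, Finset.sum_const, Finset.card_univ, Fintype.card_fin, smul_eq_mul] at hs
    have ho : Odd ((2 * n - 1) * (n - 1)) := by
      apply Odd.mul
      · exact ⟨n - 1, by omega⟩
      · exact ⟨n / 2 - 1, by omega⟩
    rw [hs] at ho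
    exact (Nat.not_odd_iff_even.mpr (even_two_mul _)) ho
  obtain ⟨i, v, hd⟩ := hex
  obtain ⟨j, hj⟩ : ∃ j : Fin 2, ∀ x : Fin 2, x ≠ i → x = j := by
    have hgen : ∀ i x : Fin 2, x ≠ i → x = 1 - i := by decide
    exact ⟨1 - i, hgen i⟩
  have hvN : v ∉ N i v := fun h => ((hN _ _ _).1 h).1 rfl
  have hNi : ∀ x ∈ N i v, c v x = i := fun x hx => ((hN _ _ _).1 hx).2
  -- edges of color `i` leaving the neighbourhood
  by_cases hA : ∃ w ∈ N i v, ∃ u, u ∉ N i v ∧ u ≠ v ∧ c w u = i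
  · obtain ⟨w, hw, u, hu, huv, hwu⟩ := hA
    obtain ⟨S, hwS, hSN, hSc⟩ := Finset.exists_subsuperset_card_eq
      (Finset.singleton_subset_iff.2 hw) (by simp; omega) hd
    exact spCopy hn c hc i v w u S hSc (fun h => hvN (hSN h))
      (hwS (Finset.mem_singleton_self w)) (fun h => hu (hSN h)) huv
      (fun x hx => hNi x (hSN hx)) hwu
  have hA' : ∀ w ∈ N i v, ∀ u, u ∉ N i v → u ≠ v → c w u = j := fun w hw u hu huv =>
    hj _ (fun h => hA ⟨w, hw, u, hu, huv, h⟩)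
  rcases Nat.lt_or_ge n (N i v).card with hd' | hd'
  · by_cases hB : ∃ w ∈ N i v, ∃ u ∈ N i v, w ≠ u ∧ c w u = i
    · obtain ⟨w, hw, u, hu, hne', hwu⟩ := hB
      have hw' : w ∈ (N i v).erase u := Finset.mem_erase.2 ⟨hne', hw⟩
      obtain ⟨S, hwS, hSN, hSc⟩ := Finset.exists_subsuperset_card_eq
        (Finset.singleton_subset_iff.2 hw') (by simp; omega : _ ≤ n)
        (by rw [Finset.card_erase_of_mem hu]; omega)
      exact spCopy hn c hc i v w u S hSc (fun h => hvN (Finset.mem_of_mem_erase (hSN h)))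
        (hwS (Finset.mem_singleton_self w)) (fun h => Finset.notMem_erase u _ (hSN h))
        (fun h => hvN (h ▸ hu))
        (fun x hx => hNi x (Finset.mem_of_mem_erase (hSN hx))) hwu
    · have hB' : ∀ w ∈ N i v, ∀ u ∈ N i v, w ≠ u → c w u = j := fun w hw u hu h' =>
        hj _ (fun h => hB ⟨w, hw, u, hu, h', h⟩)
      obtain ⟨w, x, u, hw, hx, hu, hwx, hwu, hxu⟩ := (Finset.two_lt_card_iff).1
        (show 2 < (N i v).card by omega)
      let T := ((Finset.univ.erase v).erase w).erase u
      have hT : T.card = 2 * n - 4 := by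
        have hvw : w ≠ v := fun h => hvN (h ▸ hw)
        have hvu : u ≠ v := fun h => hvN (h ▸ hu)
        rw [Finset.card_erase_of_mem (by simp [hvu, hwu.symm]),
          Finset.card_erase_of_mem (by simp [hvw]), Finset.card_erase_of_mem (by simp),
          Finset.card_univ, Fintype.card_fin]
        omega
      have hxT : x ∈ T := by
        have hvx : x ≠ v := fun h => hvN (h ▸ hx)
        simp [T, hvx, hwx.symm, hxu]
      obtain ⟨S, hxS, hST, hSc⟩ := Finset.exists_subsuperset_card_eq
        (Finset.singleton_subset_iff.2 hxT) (by simp; omega : _ ≤ n) (by omega)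
      refine spCopy hn c hc j w x u S hSc (fun h => ?_) (hxS (Finset.mem_singleton_self x))
        (fun h => Finset.notMem_erase u _ (hST h)) hwu.symm (fun y hy => ?_)
        (hB' x hx u hu hxu)
      · have := hST h
        simp [T] at this
      · have := hST hy
        simp only [T, Finset.mem_erase, Finset.mem_univ, and_true] at this
        by_cases hyN : y ∈ N i v
        · exact hB' w hw y hyN (Ne.symm this.2.1)
        · exact hA' w hw y hyN this.2.2
  · have hdn : (N i v).card = n := le_antisymm hd' hd
    have hM : 1 < ((Finset.univ.erase v) \ N i v).card := by
      have hsub : N i v ⊆ Finset.univ.erase v := fun x hx =>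
        Finset.mem_erase.2 ⟨fun h => hvN (h ▸ hx), Finset.mem_univ _⟩
      rw [Finset.card_sdiff_of_subset hsub, Finset.card_erase_of_mem (Finset.mem_univ _),
        Finset.card_univ, Fintype.card_fin]
      omega
    obtain ⟨m, hm, m', hm', hmm⟩ := Finset.one_lt_card.1 hM
    simp only [Finset.mem_sdiff, Finset.mem_erase, Finset.mem_univ, and_true] at hm hm'
    obtain ⟨w, hw⟩ := Finset.card_pos.1 (show 0 < (N i v).card by omega)
    exact spCopy hn c hc j m w m' (N i v) hdn hm.2 hw hm'.2 hmm.symm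
      (fun x hx => by rw [hc]; exact hA' x hx m hm.2 hm.1) (hA' w hw m' hm'.2 hm'.1)

/-- For every even `n ≥ 4`, every edge 2-coloring of the complete graph on
`2n − 1` vertices contains a monochromatic copy of `K⁺_{1,n}`; consequently
`R(K⁺_{1,n}, K⁺_{1,n}) ≤ 2n − 1`. -/
theorem starPlus_ramsey_upper (n : ℕ) (hn : 4 ≤ n) (hne : n % 2 = 0) :
    (∀ c : Fin (2 * n - 1) → Fin (2 * n - 1) → Fin 2, (∀ x y, c x y = c y x) →
      IsMonoCopy (⊤ : SimpleGraph (Fin (2 * n - 1))) c (starPlusG n)) ∧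
    Ramsey2 (starPlusG n) ≤ 2 * n - 1 := by
  exact ⟨spMain n hn hne, Nat.sInf_le (spMain n hn hne)⟩
end
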